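/- There exist absolute constants C > 0 and N₀ such that the following holds. Let A be a subset of the prime numbers. If for some integer N ≥ N₀ the relative density δ_P(N) = |{n ∈ A : n ≤ N}| / |{n prime : n ≤ N}| satisfies δ_P(N) ≥ C·(log log log N)/(log log N)^{1/3}, then A contains a nontrivial three-term arithmetic progression, i.e., there exist a ∈ A and an integer d ≠ 0 with a, a+d, a+2d all in A. -/

import Mathlib

open Finset

set_option linter.unusedSectionVars false
set_option linter.unusedDecidableInType false

namespace KM

section Bohr

variable {G : Type*} [AddCommGroup G] [Fintype G] [DecidableEq G]

open Classical in
/-- Bohr set. -/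
noncomputable def bohr (Γ : Finset (AddChar G ℂ)) (ρ : ℝ) : Finset G :=
  univ.filter fun x => ∀ γ ∈ Γ, ‖γ x - 1‖ ≤ ρ

lemma mem_bohr {Γ : Finset (AddChar G ℂ)} {ρ : ℝ} {x : G} :
    x ∈ bohr Γ ρ ↔ ∀ γ ∈ Γ, ‖γ x - 1‖ ≤ ρ := by simp [bohr]

lemma bohr_mono {Γ : Finset (AddChar G ℂ)} {ρ σ : ℝ} (h : ρ ≤ σ) : bohr Γ ρ ⊆ bohr Γ σ :=
  fun _ hx => mem_bohr.2 fun γ hγ => (mem_bohr.1 hx γ hγ).trans h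

lemma bohr_anti {Γ Δ : Finset (AddChar G ℂ)} {ρ : ℝ} (h : Γ ⊆ Δ) : bohr Δ ρ ⊆ bohr Γ ρ :=
  fun _ hx => mem_bohr.2 fun γ hγ => mem_bohr.1 hx γ (h hγ)

lemma zero_mem_bohr {Γ : Finset (AddChar G ℂ)} {ρ : ℝ} (h : 0 ≤ ρ) : (0 : G) ∈ bohr Γ ρ :=
  mem_bohr.2 fun γ _ => by simpa using h

lemma norm_char (γ : AddChar G ℂ) (x : G) : ‖γ x‖ = 1 := AddChar.norm_apply γ x

lemma norm_char_sub (γ : AddChar G ℂ) (x y : G) : ‖γ (x - y) - 1‖ = ‖γ x - γ y‖ := by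
  have h : γ x - γ y = γ y * (γ (x - y) - 1) := by
    rw [mul_sub, ← AddChar.map_add_eq_mul]; simp
  rw [h, norm_mul, norm_char, one_mul]

lemma norm_char_neg (γ : AddChar G ℂ) (x : G) : ‖γ (-x) - 1‖ = ‖γ x - 1‖ := by
  have := norm_char_sub γ 0 x
  rw [zero_sub] at this
  rw [this, AddChar.map_zero_eq_one, norm_sub_rev]

lemma neg_mem_bohr {Γ : Finset (AddChar G ℂ)} {ρ : ℝ} {x : G} :
    -x ∈ bohr Γ ρ ↔ x ∈ bohr Γ ρ := by
  simp only [mem_bohr, norm_char_neg]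

lemma add_mem_bohr {Γ : Finset (AddChar G ℂ)} {ρ σ : ℝ} {x y : G}
    (hx : x ∈ bohr Γ ρ) (hy : y ∈ bohr Γ σ) : x + y ∈ bohr Γ (ρ + σ) := by
  refine mem_bohr.2 fun γ hγ => ?_
  have h1 := mem_bohr.1 hx γ hγ
  have h2 := mem_bohr.1 hy γ hγ
  have : γ (x + y) - 1 = γ x * (γ y - 1) + (γ x - 1) := by
    rw [AddChar.map_add_eq_mul]; ring
  rw [this]
  calc _ ≤ ‖γ x * (γ y - 1)‖ + ‖γ x - 1‖ := norm_add_le _ _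
    _ ≤ σ + ρ := by
      rw [norm_mul, norm_char, one_mul]; linarith
    _ = _ := add_comm _ _

lemma sub_mem_bohr {Γ : Finset (AddChar G ℂ)} {ρ σ : ℝ} {x y : G}
    (hx : x ∈ bohr Γ ρ) (hy : y ∈ bohr Γ σ) : x - y ∈ bohr Γ (ρ + σ) := by
  rw [sub_eq_add_neg]; exact add_mem_bohr hx (neg_mem_bohr.2 hy)

lemma bohr_card_pos {Γ : Finset (AddChar G ℂ)} {ρ : ℝ} (h : 0 ≤ ρ) : 0 < (bohr Γ ρ).card :=
  card_pos.2 ⟨0, zero_mem_bohr h⟩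

lemma cell_aux {z w : ℂ} {ρ : ℝ} (hρ : 0 < ρ) (h1 : ⌊2 * z.re / ρ⌋ = ⌊2 * w.re / ρ⌋)
    (h2 : ⌊2 * z.im / ρ⌋ = ⌊2 * w.im / ρ⌋) : ‖z - w‖ ≤ ρ := by
  have a1 := Int.abs_sub_lt_one_of_floor_eq_floor h1
  have a2 := Int.abs_sub_lt_one_of_floor_eq_floor h2
  have e1 : 2 * z.re / ρ - 2 * w.re / ρ = (z - w).re * (2 / ρ) := by simp; ring
  have e2 : 2 * z.im / ρ - 2 * w.im / ρ = (z - w).im * (2 / ρ) := by simp; ring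
  rw [e1, abs_mul, abs_of_pos (by positivity : 0 < 2 / ρ), ← lt_div_iff₀ (by positivity)] at a1
  rw [e2, abs_mul, abs_of_pos (by positivity : 0 < 2 / ρ), ← lt_div_iff₀ (by positivity)] at a2
  have := Complex.norm_le_abs_re_add_abs_im (z - w)
  have e : 1 / (2 / ρ) = ρ / 2 := by field_simp
  rw [e] at a1 a2
  linarith

lemma floor_cell {t ρ : ℝ} (hρ : 0 < ρ) (h : |t| ≤ 2 * ρ) : ⌊2 * t / ρ⌋ ∈ Icc (-4 : ℤ) 4 := by
  rw [abs_le] at h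
  rw [mem_Icc]
  constructor
  · rw [Int.le_floor, le_div_iff₀ hρ]; push_cast; linarith
  · have : 2 * t / ρ < ((5 : ℤ) : ℝ) := by rw [div_lt_iff₀ hρ]; push_cast; linarith
    have := Int.floor_lt.2 this
    omega

lemma bohr_doubling (Γ : Finset (AddChar G ℂ)) {ρ : ℝ} (hρ : 0 < ρ) :
    (bohr Γ (2 * ρ)).card ≤ 81 ^ Γ.card * (bohr Γ ρ).card := by
  classical
  let f : G → (Γ → ℤ × ℤ) := fun x γ =>
    (⌊2 * ((γ : AddChar G ℂ) x - 1).re / ρ⌋, ⌊2 * ((γ : AddChar G ℂ) x - 1).im / ρ⌋)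
  have hsub : (bohr Γ (2 * ρ)).image f ⊆
      Fintype.piFinset fun _ : Γ => (Icc (-4 : ℤ) 4) ×ˢ (Icc (-4 : ℤ) 4) := by
    intro y hy
    obtain ⟨x, hx, rfl⟩ := mem_image.1 hy
    rw [Fintype.mem_piFinset]
    intro γ
    have := mem_bohr.1 hx γ γ.2
    rw [mem_product]
    exact ⟨floor_cell hρ ((Complex.abs_re_le_norm _).trans this),
      floor_cell hρ ((Complex.abs_im_le_norm _).trans this)⟩
  have hcard : ((bohr Γ (2 * ρ)).image f).card ≤ 81 ^ Γ.card := by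
    refine (card_le_card hsub).trans ?_
    rw [Fintype.card_piFinset]
    simp
  have := Finset.card_le_mul_card_image (f := f) (bohr Γ (2 * ρ)) (bohr Γ ρ).card ?_
  · calc _ ≤ _ := this
      _ ≤ (bohr Γ ρ).card * 81 ^ Γ.card := Nat.mul_le_mul_left _ hcard
      _ = _ := mul_comm _ _
  · intro b hb
    obtain ⟨x, hx, rfl⟩ := mem_image.1 hb
    refine card_le_card_of_injOn (fun y => y - x) ?_ (fun a _ b _ h => sub_left_injective h)
    intro y hy
    have hy := (mem_filter.1 (mem_coe.1 hy)).2
    refine mem_coe.2 (mem_bohr.2 fun γ hγ => ?_)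
    have h := congrFun hy ⟨γ, hγ⟩
    simp only [f, Prod.mk.injEq] at h
    have := cell_aux hρ h.1 h.2
    rw [norm_char_sub]
    simpa using this

lemma bohr_two (Γ : Finset (AddChar G ℂ)) : bohr Γ 2 = univ := by
  ext x
  simp only [mem_bohr, mem_univ, iff_true]
  intro γ _
  calc _ ≤ ‖γ x‖ + ‖(1 : ℂ)‖ := norm_sub_le _ _
    _ = 2 := by rw [norm_char]; norm_num

lemma bohr_size (Γ : Finset (AddChar G ℂ)) (m : ℕ) :
    Fintype.card G ≤ 81 ^ (Γ.card * m) * (bohr Γ (2 * (1 / 2) ^ m)).card := by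
  induction m with
  | zero => simp [bohr_two]
  | succ m ih =>
    refine ih.trans ?_
    have := bohr_doubling Γ (ρ := 2 * (1 / 2) ^ (m + 1)) (by positivity)
    have e : (2 : ℝ) * (2 * (1 / 2) ^ (m + 1)) = 2 * (1 / 2) ^ m := by rw [pow_succ]; ring
    rw [e] at this
    calc _ ≤ 81 ^ (Γ.card * m) * (81 ^ Γ.card * (bohr Γ (2 * (1 / 2) ^ (m + 1))).card) :=
          Nat.mul_le_mul_left _ this
      _ = _ := by rw [mul_add, pow_add]; ring

/-- regularity of a Bohr set. -/
def Reg (κ ε : ℝ) (Γ : Finset (AddChar G ℂ)) (ρ : ℝ) : Prop :=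
  0 < ρ ∧ ((bohr Γ (ρ + κ * ρ)).card : ℝ) ≤ (1 + ε) * (bohr Γ ρ).card

lemma exists_reg {κ ε : ℝ} {D J : ℕ} (hκ : 0 ≤ κ) (hε : 0 ≤ ε) (hJ : κ * J ≤ 1 / 2)
    (hJ2 : (81 : ℝ) ^ D < (1 + ε) ^ J)
    (Γ : Finset (AddChar G ℂ)) (hΓ : Γ.card ≤ D) {ρ : ℝ} (hρ : 0 < ρ) :
    ∃ ρ', ρ / 2 ≤ ρ' ∧ ρ' ≤ ρ ∧ Reg κ ε Γ ρ' := by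
  by_contra! hcon
  have hpow : ∀ i ≤ J, (1 + κ) ^ i ≤ 2 := by
    intro i hi
    calc (1 + κ) ^ i ≤ (1 + κ) ^ J := pow_le_pow_right₀ (by linarith) hi
      _ ≤ (Real.exp κ) ^ J := by
        gcongr; linarith [Real.add_one_le_exp κ]
      _ = Real.exp (κ * J) := by rw [← Real.exp_nat_mul]; ring_nf
      _ ≤ Real.exp (1 / 2) := Real.exp_le_exp.2 hJ
      _ ≤ 2 := by
        have := Real.exp_one_lt_d9
        have h2 : Real.exp (1 / 2) ^ 2 = Real.exp 1 := by rw [← Real.exp_nat_mul]; norm_num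
        nlinarith [Real.exp_pos (1 / 2)]
  have key : ∀ i ≤ J, (1 + ε) ^ i * (bohr Γ (ρ / 2)).card ≤ (bohr Γ (ρ / 2 * (1 + κ) ^ i)).card := by
    intro i
    induction i with
    | zero => intro _; simp
    | succ i ih =>
      intro hi
      have h1 := ih (by omega)
      have h2 := hpow i (by omega)
      have h3 : 1 ≤ (1 + κ) ^ i := one_le_pow₀ (by linarith)
      have h4 := hcon (ρ / 2 * (1 + κ) ^ i) (by nlinarith) (by nlinarith)
      simp only [Reg, not_and, not_le] at h4
      have h5 := h4 (by positivity)
      have e : ρ / 2 * (1 + κ) ^ i + κ * (ρ / 2 * (1 + κ) ^ i) = ρ / 2 * (1 + κ) ^ (i + 1) := by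
        rw [pow_succ]; ring
      rw [e] at h5
      calc _ = (1 + ε) * ((1 + ε) ^ i * (bohr Γ (ρ / 2)).card) := by rw [pow_succ]; ring
        _ ≤ (1 + ε) * (bohr Γ (ρ / 2 * (1 + κ) ^ i)).card := by gcongr
        _ ≤ _ := h5.le
  have h1 := key J le_rfl
  have h2 : ((bohr Γ (ρ / 2 * (1 + κ) ^ J)).card : ℝ) ≤ 81 ^ D * (bohr Γ (ρ / 2)).card := by
    have a := card_le_card (bohr_mono (Γ := Γ) (ρ := ρ / 2 * (1 + κ) ^ J) (σ := 2 * (ρ / 2))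
      (by nlinarith [hpow J le_rfl]))
    have b := bohr_doubling Γ (ρ := ρ / 2) (by positivity)
    have c : (81 : ℕ) ^ Γ.card ≤ 81 ^ D := Nat.pow_le_pow_right (by norm_num) hΓ
    have := a.trans (b.trans (Nat.mul_le_mul_right _ c))
    exact_mod_cast this
  have h3 : (0 : ℝ) < (bohr Γ (ρ / 2)).card := by
    exact_mod_cast bohr_card_pos (by positivity)
  have := h1.trans h2
  have := le_of_mul_le_mul_right this h3
  linarith

/-- approximate invariance -/
lemma reg_shift {κ ε : ℝ} (hκ : 0 ≤ κ) {Γ : Finset (AddChar G ℂ)} {ρ : ℝ} (h : Reg κ ε Γ ρ) {t : G}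
    (ht : t ∈ bohr Γ (κ * ρ)) :
    (((bohr Γ ρ).filter fun x => x + t ∉ bohr Γ ρ).card : ℝ) ≤ ε * (bohr Γ ρ).card := by
  classical
  have h1 : ((bohr Γ ρ).filter fun x => x + t ∉ bohr Γ ρ).card + (bohr Γ ρ).card ≤
      (bohr Γ (ρ + κ * ρ)).card := by
    have e : ((bohr Γ ρ).filter fun x => x + t ∉ bohr Γ ρ).card =
        (((bohr Γ ρ).filter fun x => x + t ∉ bohr Γ ρ).image (· + t)).card :=
      (card_image_of_injective _ (add_left_injective t)).symm
    rw [e, ← card_union_of_disjoint]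
    · apply card_le_card
      apply union_subset
      · intro y hy
        obtain ⟨x, hx, rfl⟩ := mem_image.1 hy
        exact add_mem_bohr (mem_filter.1 hx).1 ht
      · apply bohr_mono
        nlinarith [h.1]
    · rw [disjoint_left]
      intro y hy
      obtain ⟨x, hx, rfl⟩ := mem_image.1 hy
      exact (mem_filter.1 hx).2
  have h2 := h.2
  have : ((((bohr Γ ρ).filter fun x => x + t ∉ bohr Γ ρ).card : ℝ) + (bohr Γ ρ).card) ≤
      (bohr Γ (ρ + κ * ρ)).card := by exact_mod_cast h1
  linarith

lemma exists_half (hG : Function.Injective fun x : G => x + x) (Γ : Finset (AddChar G ℂ)) :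
    ∃ Γh : Finset (AddChar G ℂ), Γh.card ≤ Γ.card ∧
      ∀ ρ, bohr Γh ρ = (bohr Γ ρ).image fun x => x + x := by
  classical
  let dbl : G →+ G := ⟨⟨fun x => x + x, by simp⟩, fun x y => by simp only; abel⟩
  let e : G ≃+ G := AddEquiv.ofBijective dbl (Finite.injective_iff_bijective.1 hG)
  have he : ∀ x, e x = x + x := fun x => rfl
  refine ⟨Γ.image fun γ => γ.compAddMonoidHom (e.symm : G →+ G), card_image_le, fun ρ => ?_⟩
  ext y
  simp only [mem_bohr, mem_image, forall_exists_index, and_imp, forall_apply_eq_imp_iff₂]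
  constructor
  · intro h
    refine ⟨e.symm y, fun γ hγ => ?_, ?_⟩
    · simpa using h γ hγ
    · rw [← he]; simp
  · rintro ⟨x, hx, rfl⟩ γ hγ
    have := hx γ hγ
    rw [← he]
    simpa using this

end Bohr

end KM


open Finset

set_option linter.unusedSectionVars false
set_option linter.unusedDecidableInType false

namespace KM

section Moments

variable {G : Type*} [AddCommGroup G] [Fintype G] [DecidableEq G]

/-- convolution square -/
def cv (g : G → ℝ) (w : G) : ℝ := ∑ x, g x * g (w - x)

/-- difference convolution square -/
def dc (g : G → ℝ) (w : G) : ℝ := ∑ x, g (x + w) * g x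

/-- auxiliary average -/
def UU (g m : G → ℝ) (p : ℕ) (s : Fin p → G) : ℝ := ∑ v, m v * ∏ i, g (s i + v)

lemma dc_eq (g : G → ℝ) (v v' : G) : dc g (v - v') = ∑ x, g (x + v) * g (x + v') := by
  unfold dc
  rw [← Equiv.sum_comp (Equiv.addRight v')]
  refine sum_congr rfl fun x _ => ?_
  simp only [Equiv.coe_addRight]
  congr 2; abel

lemma cv_eq (g : G → ℝ) (l v v' : G) :
    cv g (l + v - v') = ∑ x, g (x + v) * g (l - x - v') := by
  unfold cv
  rw [← Equiv.sum_comp (Equiv.addRight v)]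
  refine sum_congr rfl fun x _ => ?_
  simp only [Equiv.coe_addRight]
  congr 2; abel

lemma moment_aux (m : G → ℝ) (p : ℕ) (a b : G → G → ℝ) :
    ∑ v, ∑ v', m v * m v' * (∑ x, a x v * b x v') ^ p =
      ∑ s : Fin p → G, (∑ v, m v * ∏ i, a (s i) v) * (∑ v, m v * ∏ i, b (s i) v) := by
  simp_rw [Fintype.sum_pow, Finset.prod_mul_distrib, Finset.sum_mul_sum, Finset.mul_sum]
  calc _ = ∑ v, ∑ s : Fin p → G, ∑ v', m v * m v' * ((∏ i, a (s i) v) * ∏ i, b (s i) v') := by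
        refine sum_congr rfl fun v _ => sum_comm
    _ = ∑ s : Fin p → G, ∑ v, ∑ v', m v * m v' * ((∏ i, a (s i) v) * ∏ i, b (s i) v') := sum_comm
    _ = _ := by
        refine sum_congr rfl fun s _ => sum_congr rfl fun v _ => sum_congr rfl fun v' _ => ?_
        ring

lemma dc_moment (g m : G → ℝ) (p : ℕ) :
    ∑ v, ∑ v', m v * m v' * (dc g (v - v')) ^ p = ∑ s : Fin p → G, UU g m p s ^ 2 := by
  simp_rw [dc_eq]
  rw [moment_aux m p (fun x v => g (x + v)) (fun x v => g (x + v))]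
  simp only [UU, sq]

lemma cv_moment (g m : G → ℝ) (hm : ∀ v, m (-v) = m v) (p : ℕ) (l : G) :
    ∑ v, ∑ v', m v * m v' * (cv g (l + v - v')) ^ p ≤
      ∑ v, ∑ v', m v * m v' * (dc g (v - v')) ^ p := by
  rw [dc_moment]
  simp_rw [cv_eq]
  rw [moment_aux m p (fun x v => g (x + v)) (fun x v => g (l - x - v))]
  have h : ∀ s : Fin p → G, (∑ v, m v * ∏ i, g (l - s i - v)) = UU g m p (fun i => l - s i) := by
    intro s
    unfold UU
    rw [← Equiv.sum_comp (Equiv.neg G)]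
    refine sum_congr rfl fun v _ => ?_
    simp [hm]
  simp_rw [h]
  have h2 : ∑ s : Fin p → G, UU g m p (fun i => l - s i) ^ 2 = ∑ s : Fin p → G, UU g m p s ^ 2 := by
    exact (Equiv.arrowCongr (Equiv.refl (Fin p)) (Equiv.subLeft l)).sum_comp
      (fun s => UU g m p s ^ 2)
  calc _ ≤ ∑ s : Fin p → G, (UU g m p s ^ 2 + UU g m p (fun i => l - s i) ^ 2) / 2 := by
        refine sum_le_sum fun s _ => ?_
        change UU g m p s * _ ≤ _
        nlinarith [sq_nonneg (UU g m p s - UU g m p (fun i => l - s i))]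
    _ = _ := by rw [← Finset.sum_div, sum_add_distrib, h2]; ring

lemma binom_lower (g m : G → ℝ) {K : ℝ} (hK : 0 < K) (p q : ℕ) (hpq : p ≤ q) :
    (q.choose p : ℝ) * ∑ v, ∑ v', m v * m v' * (dc g (v - v') / K) ^ p ≤
      ∑ v, ∑ v', m v * m v' * (1 + dc g (v - v') / K) ^ q := by
  have hnn : ∀ k, 0 ≤ ∑ v, ∑ v', m v * m v' * (dc g (v - v') / K) ^ k := by
    intro k
    have : ∑ v, ∑ v', m v * m v' * (dc g (v - v') / K) ^ k =
        (∑ v, ∑ v', m v * m v' * (dc g (v - v')) ^ k) / K ^ k := by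
      simp_rw [div_pow, Finset.sum_div, mul_div_assoc]
    rw [this, dc_moment]
    positivity
  have e : ∑ v, ∑ v', m v * m v' * (1 + dc g (v - v') / K) ^ q =
      ∑ k ∈ range (q + 1), (q.choose k : ℝ) *
        ∑ v, ∑ v', m v * m v' * (dc g (v - v') / K) ^ k := by
    have e1 : ∀ v v' : G, m v * m v' * (1 + dc g (v - v') / K) ^ q =
        ∑ k ∈ range (q + 1), (q.choose k : ℝ) * (m v * m v' * (dc g (v - v') / K) ^ k) := by
      intro v v'
      rw [add_comm (1 : ℝ), add_pow, Finset.mul_sum]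
      refine sum_congr rfl fun k _ => ?_
      rw [one_pow]; ring
    simp_rw [e1, Finset.mul_sum]
    calc _ = ∑ v, ∑ k ∈ range (q + 1), ∑ v',
          (q.choose k : ℝ) * (m v * m v' * (dc g (v - v') / K) ^ k) :=
          sum_congr rfl fun v _ => sum_comm
      _ = _ := sum_comm
  rw [e]
  exact single_le_sum (f := fun k => (q.choose k : ℝ) *
    ∑ v, ∑ v', m v * m v' * (dc g (v - v') / K) ^ k)
    (fun k _ => mul_nonneg (by positivity) (hnn k)) (mem_range.2 (by omega))

lemma choose_lower (p : ℕ) : (7 : ℝ) ^ p ≤ ((8 * p).choose p : ℝ) := by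
  have h1 := Nat.pow_le_choose (α := ℝ) p (8 * p)
  have h2 : (p.factorial : ℝ) ≤ (p : ℝ) ^ p := by exact_mod_cast Nat.factorial_le_pow p
  have h0 : (0 : ℝ) < p.factorial := by exact_mod_cast Nat.factorial_pos p
  refine le_trans ?_ h1
  rw [le_div_iff₀ h0]
  calc (7 : ℝ) ^ p * p.factorial ≤ 7 ^ p * (p : ℝ) ^ p := by gcongr
    _ = (7 * p : ℝ) ^ p := by rw [mul_pow]
    _ ≤ _ := by
      gcongr
      have : 7 * p ≤ 8 * p + 1 - p := by omega
      exact_mod_cast this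

end Moments

end KM


open Finset

set_option linter.unusedSectionVars false
set_option linter.unusedDecidableInType false

namespace KM

section Lift

variable {G : Type*} [AddCommGroup G] [Fintype G] [DecidableEq G]

/-- indicator function -/
def ind (A : Finset G) (x : G) : ℝ := if x ∈ A then 1 else 0

lemma ind_nonneg (A : Finset G) (x : G) : 0 ≤ ind A x := by unfold ind; split_ifs <;> norm_num
lemma ind_le_one (A : Finset G) (x : G) : ind A x ≤ 1 := by unfold ind; split_ifs <;> norm_num

lemma sum_ind (A : Finset G) : ∑ x, ind A x = A.card := by simp [ind]

lemma sum_ind_mul (A : Finset G) (f : G → ℝ) : ∑ x, ind A x * f x = ∑ x ∈ A, f x := by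
  simp [ind, Finset.sum_ite_mem]

lemma ind_mul_lower {A B : Finset G} (h : A ⊆ B) (π : G → G) {e : ℝ}
    (he : ((B.filter fun x => π x ∉ B).card : ℝ) ≤ e) :
    (A.card : ℝ) - e ≤ ∑ x, ind A x * ind B (π x) := by
  have h1 : (A.card : ℝ) - ∑ x, ind A x * ind B (π x) ≤ (B.filter fun x => π x ∉ B).card := by
    rw [← sum_ind A, ← sum_ind (B.filter fun x => π x ∉ B), ← sum_sub_distrib]
    refine sum_le_sum fun x _ => ?_
    simp only [ind, mem_filter]
    by_cases hA : x ∈ A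
    · have := h hA
      by_cases hB : π x ∈ B <;> simp [*]
    · simp only [hA, if_false, zero_mul, sub_zero]
      split_ifs <;> norm_num
  linarith

lemma ind_mul_upper (A B : Finset G) (π : G → G) :
    ∑ x, ind A x * ind B (π x) ≤ A.card := by
  rw [← sum_ind A]
  refine sum_le_sum fun x _ => ?_
  nlinarith [ind_nonneg A x, ind_le_one B (π x), ind_nonneg B (π x)]

/-- the balanced function -/
def bal (A B : Finset G) (α : ℝ) (x : G) : ℝ := ind A x - α * ind B x

lemma cv_bal {A B : Finset G} (h : A ⊆ B) {α ε : ℝ} (hα : 0 ≤ α) (hA : (A.card : ℝ) = α * B.card)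
    {w : G} (hw : ((B.filter fun x => w - x ∉ B).card : ℝ) ≤ ε * B.card)
    (h1 : ((A.filter fun x => w - x ∈ A).card : ℝ) ≤ 1) :
    cv (bal A B α) w ≤ 1 - α ^ 2 * B.card + 2 * α * ε * B.card := by
  have e : cv (bal A B α) w = ∑ x, ind A x * ind A (w - x) - α * ∑ x, ind A x * ind B (w - x)
      - α * ∑ x, ind B x * ind A (w - x) + α ^ 2 * ∑ x, ind B x * ind B (w - x) := by
    unfold cv bal
    simp_rw [Finset.mul_sum]
    rw [← sum_sub_distrib, ← sum_sub_distrib, ← sum_add_distrib]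
    refine sum_congr rfl fun x _ => ?_
    ring
  have e2 : ∑ x, ind B x * ind A (w - x) = ∑ x, ind A x * ind B (w - x) := by
    rw [← Equiv.sum_comp (Equiv.subLeft w)]
    refine sum_congr rfl fun x _ => ?_
    simp [mul_comm]
  have e3 : ∑ x, ind A x * ind A (w - x) = (A.filter fun x => w - x ∈ A).card := by
    rw [sum_ind_mul]
    simp [ind]
  have b1 := ind_mul_lower h (fun x => w - x) hw
  have b2 := ind_mul_upper B B (fun x => w - x)
  rw [e, e2, e3]
  rw [hA] at b1
  nlinarith [mul_le_mul_of_nonneg_left b1 hα, mul_le_mul_of_nonneg_left b2 (sq_nonneg α)]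

lemma dc_bal {A B : Finset G} (h : A ⊆ B) {α ε : ℝ} (hα : 0 ≤ α) (hA : (A.card : ℝ) = α * B.card)
    {w : G} (hw : ((B.filter fun x => x + w ∉ B).card : ℝ) ≤ ε * B.card)
    (hw' : ((B.filter fun x => x - w ∉ B).card : ℝ) ≤ ε * B.card) :
    dc (bal A B α) w ≤ dc (ind A) w - α ^ 2 * B.card + 2 * α * ε * B.card ∧
    dc (ind A) w - α ^ 2 * B.card - α ^ 2 * ε * B.card ≤ dc (bal A B α) w := by
  have e : dc (bal A B α) w = dc (ind A) w - α * ∑ x, ind A (x + w) * ind B x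
      - α * ∑ x, ind A x * ind B (x + w) + α ^ 2 * ∑ x, ind B x * ind B (x + w) := by
    unfold dc bal
    simp_rw [Finset.mul_sum]
    rw [← sum_sub_distrib, ← sum_sub_distrib, ← sum_add_distrib]
    refine sum_congr rfl fun x _ => ?_
    ring
  have e2 : ∑ x, ind A (x + w) * ind B x = ∑ x, ind A x * ind B (x - w) := by
    rw [← Equiv.sum_comp (Equiv.addRight w) (fun x => ind A x * ind B (x - w))]
    refine sum_congr rfl fun x _ => ?_
    simp
  have b1 := ind_mul_lower h (fun x => x + w) hw
  have b1' := ind_mul_lower h (fun x => x - w) hw'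
  have c1 := ind_mul_upper A B (fun x => x + w)
  have c1' := ind_mul_upper A B (fun x => x - w)
  have b2 := ind_mul_upper B B (fun x => x + w)
  have b3 := ind_mul_lower (subset_refl B) (fun x => x + w) hw
  rw [e, e2]
  rw [hA] at b1 b1' c1 c1'
  constructor
  · nlinarith [mul_le_mul_of_nonneg_left b1 hα, mul_le_mul_of_nonneg_left b1' hα,
      mul_le_mul_of_nonneg_left b2 (sq_nonneg α)]
  · nlinarith [mul_le_mul_of_nonneg_left c1 hα, mul_le_mul_of_nonneg_left c1' hα,
      mul_le_mul_of_nonneg_left b3 (sq_nonneg α)]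

lemma lift_main {A B C W Wp : Finset G} (m : G → ℝ) {α α₂ ε θ : ℝ} {p : ℕ} (hp : Even p)
    (hm0 : ∀ v, 0 ≤ m v) (hm : ∀ v, m (-v) = m v)
    (h : A ⊆ B) (hα : 0 < α) (hα1 : α ≤ 2) (hA : (A.card : ℝ) = α * B.card)
    (hB : 4 ≤ α ^ 2 * B.card) (hε0 : 0 ≤ ε) (hε : ε ≤ α / 8) (hθ : 2 * ε ≤ α * θ)
    (hC1 : ∀ w ∈ C, ((B.filter fun x => w - x ∉ B).card : ℝ) ≤ ε * B.card)
    (hC2 : ∀ w ∈ C, ((A.filter fun x => w - x ∈ A).card : ℝ) ≤ 1)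
    (hCW : C ⊆ W) (hCc : α₂ * W.card ≤ C.card) (hW0 : 0 < W.card)
    (hWp : ∀ w ∈ W, ∀ v v', m v ≠ 0 → m v' ≠ 0 → w - v + v' ∈ Wp)
    (hWc : (Wp.card : ℝ) ≤ 2 * W.card) (hα₂ : 2 ≤ α₂ * 2 ^ p)
    (hsh : ∀ v v', m v ≠ 0 → m v' ≠ 0 →
      ((B.filter fun x => x + (v - v') ∉ B).card : ℝ) ≤ ε * B.card) :
    (7 / 4) ^ p * (∑ v, m v) ^ 2 ≤
      ∑ v, ∑ v', m v * m v' * (dc (ind A) (v - v') / (α ^ 2 * B.card) + θ) ^ (8 * p) := by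
  set K : ℝ := α ^ 2 * B.card with hK
  have hK0 : 0 < K := by linarith
  set g := bal A B α with hg
  -- moment lower bound
  have hcv : ∀ w ∈ C, (1 / 2 * K) ^ p ≤ cv g w ^ p := by
    intro w hw
    have := cv_bal h hα.le hA (hC1 w hw) (hC2 w hw)
    have h2 : cv g w ≤ -(1 / 2 * K) := by
      have : 2 * α * ε * B.card ≤ 2 * α * (α / 8) * B.card := by gcongr
      have e : 2 * α * (α / 8) * B.card = K / 4 := by rw [hK]; ring
      linarith
    rw [← hp.neg_pow (cv g w)]
    gcongr
    linarith
  set M := ∑ v, m v with hM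
  set Q := ∑ v, ∑ v', m v * m v' * (dc g (v - v')) ^ p with hQ
  have hMM : M ^ 2 = ∑ v, ∑ v', m v * m v' := by
    rw [hM, sq, Finset.sum_mul_sum]
  have h1 : M ^ 2 * (C.card * (1 / 2 * K) ^ p) ≤ Wp.card * Q := by
    calc M ^ 2 * (C.card * (1 / 2 * K) ^ p) ≤ M ^ 2 * ∑ w ∈ W, cv g w ^ p := by
          gcongr
          calc (C.card : ℝ) * (1 / 2 * K) ^ p = ∑ w ∈ C, (1 / 2 * K) ^ p := by simp
            _ ≤ ∑ w ∈ C, cv g w ^ p := sum_le_sum hcv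
            _ ≤ _ := sum_le_sum_of_subset_of_nonneg hCW fun w _ _ => hp.pow_nonneg _
      _ = ∑ v, ∑ v', m v * m v' * ∑ w ∈ W, cv g w ^ p := by
          rw [hMM, Finset.sum_mul]; simp_rw [Finset.sum_mul]
      _ ≤ ∑ v, ∑ v', m v * m v' * ∑ l ∈ Wp, cv g (l + v - v') ^ p := by
          refine sum_le_sum fun v _ => sum_le_sum fun v' _ => ?_
          by_cases hv : m v = 0
          · simp [hv]
          by_cases hv' : m v' = 0
          · simp [hv']
          refine mul_le_mul_of_nonneg_left ?_ (mul_nonneg (hm0 v) (hm0 v'))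
          have : ∑ w ∈ W, cv g w ^ p = ∑ l ∈ W.image (fun w => w - v + v'), cv g (l + v - v') ^ p := by
            rw [sum_image]
            · refine sum_congr rfl fun w _ => ?_
              congr 2; abel
            · intro a _ b _ hab
              simpa using hab
          rw [this]
          refine sum_le_sum_of_subset_of_nonneg ?_ fun w _ _ => hp.pow_nonneg _
          intro y hy
          obtain ⟨w, hw, rfl⟩ := mem_image.1 hy
          exact hWp w hw v v' hv hv'
      _ = ∑ l ∈ Wp, ∑ v, ∑ v', m v * m v' * cv g (l + v - v') ^ p := by
          simp_rw [Finset.mul_sum]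
          calc _ = ∑ v, ∑ l ∈ Wp, ∑ v', m v * m v' * cv g (l + v - v') ^ p :=
                sum_congr rfl fun v _ => sum_comm
            _ = _ := sum_comm
      _ ≤ ∑ l ∈ Wp, Q := sum_le_sum fun l _ => cv_moment g m hm p l
      _ = _ := by simp
  have hQ0 : 0 ≤ Q := by rw [hQ, dc_moment]; positivity
  have h2 : M ^ 2 * (1 / 4 * K) ^ p ≤ Q := by
    have hW0' : (0 : ℝ) < W.card := by exact_mod_cast hW0
    have a1 : M ^ 2 * ((α₂ * W.card) * (1 / 2 * K) ^ p) ≤ (2 * W.card) * Q := by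
      calc _ ≤ M ^ 2 * (C.card * (1 / 2 * K) ^ p) := by gcongr
        _ ≤ _ := h1
        _ ≤ _ := by gcongr
    have a2 : M ^ 2 * (α₂ * (1 / 2 * K) ^ p) ≤ 2 * Q := by
      have : W.card * (M ^ 2 * (α₂ * (1 / 2 * K) ^ p)) ≤ W.card * (2 * Q) := by linarith
      exact le_of_mul_le_mul_left this hW0'
    have a3 : (1 / 2 * K) ^ p = 2 ^ p * (1 / 4 * K) ^ p := by rw [← mul_pow]; ring_nf
    rw [a3] at a2
    have a4 : M ^ 2 * (1 / 4 * K) ^ p * 2 ≤ M ^ 2 * (1 / 4 * K) ^ p * (α₂ * 2 ^ p) := by gcongr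
    nlinarith
  have h3 := binom_lower g m hK0 p (8 * p) (by omega)
  have h4 : ∑ v, ∑ v', m v * m v' * (dc g (v - v') / K) ^ p = Q / K ^ p := by
    rw [hQ]; simp_rw [div_pow, Finset.sum_div, mul_div_assoc]
  rw [h4] at h3
  calc (7 / 4) ^ p * M ^ 2 = 7 ^ p * (M ^ 2 * (1 / 4 * K) ^ p / K ^ p) := by
        rw [mul_pow, div_pow, div_pow, one_pow]; field_simp
    _ ≤ (8 * p).choose p * (Q / K ^ p) := by
        gcongr; exact choose_lower p
    _ ≤ _ := h3
    _ ≤ _ := by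
        refine sum_le_sum fun v _ => sum_le_sum fun v' _ => ?_
        by_cases hv : m v = 0
        · simp [hv]
        by_cases hv' : m v' = 0
        · simp [hv']
        refine mul_le_mul_of_nonneg_left ?_ (mul_nonneg (hm0 v) (hm0 v'))
        have s1 := hsh v v' hv hv'
        have s2 := hsh v' v hv' hv
        have e : ∀ x, x + (v' - v) = x - (v - v') := fun x => by abel
        simp_rw [e] at s2
        obtain ⟨b1, b2⟩ := dc_bal h hα.le hA s1 s2
        have ev : Even (8 * p) := hp.mul_left 8
        rw [← ev.pow_abs (1 + dc g (v - v') / K)]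
        gcongr
        have hB0 : (0 : ℝ) ≤ B.card := by positivity
        have t1 : 2 * α * ε * B.card ≤ θ * K := by
          rw [hK]; nlinarith [mul_nonneg hα.le hB0]
        have t2 : α ^ 2 * ε * B.card ≤ 2 * α * ε * B.card := by
          have : α ^ 2 * ε ≤ 2 * α * ε := by nlinarith [mul_nonneg hα.le hε0]
          gcongr
        have hd : 0 ≤ dc (ind A) (v - v') :=
          sum_nonneg fun x _ => mul_nonneg (ind_nonneg _ _) (ind_nonneg _ _)
        have u1 : K * (1 + dc g (v - v') / K) = K + dc g (v - v') := by field_simp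
        have u2 : K * (dc (ind A) (v - v') / K + θ) = dc (ind A) (v - v') + θ * K := by field_simp
        rw [abs_le]
        constructor
        · refine le_of_mul_le_mul_left ?_ hK0
          rw [mul_neg, u1, u2]; linarith
        · refine le_of_mul_le_mul_left ?_ hK0
          rw [u1, u2]; linarith

end Lift

end KM


open Finset

set_option linter.unusedSectionVars false
set_option linter.unusedDecidableInType false

namespace KM

section Sift

variable {G : Type*} [AddCommGroup G] [Fintype G] [DecidableEq G]

/-- product of indicators -/
def JJ (A : Finset G) {q : ℕ} (s : Fin q → G) (x : G) : ℝ := ∏ i, ind A (s i + x)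

lemma JJ_eq (A : Finset G) {q : ℕ} (s : Fin q → G) (x : G) :
    JJ A s x = if ∀ i, s i + x ∈ A then 1 else 0 := by
  unfold JJ
  split_ifs with h
  · exact prod_eq_one fun i _ => by simp [ind, h i]
  · push Not at h
    obtain ⟨i, hi⟩ := h
    exact prod_eq_zero (mem_univ i) (by simp [ind, hi])

lemma JJ_nonneg (A : Finset G) {q : ℕ} (s : Fin q → G) (x : G) : 0 ≤ JJ A s x := by
  rw [JJ_eq]; split_ifs <;> norm_num

lemma sum_JJ (A : Finset G) (q : ℕ) (x : G) :
    ∑ s : Fin q → G, JJ A s x = (A.card : ℝ) ^ q := by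
  unfold JJ
  rw [← Fintype.sum_pow (fun a => ind A (a + x)) q, ← sum_ind A,
    ← Equiv.sum_comp (Equiv.addRight x) (ind A)]
  rfl

lemma sum_JJ_mul (A : Finset G) (q : ℕ) (x y : G) :
    ∑ s : Fin q → G, JJ A s x * JJ A s y = dc (ind A) (x - y) ^ q := by
  unfold JJ
  rw [dc_eq, Fintype.sum_pow]
  simp_rw [prod_mul_distrib]

set_option maxHeartbeats 1000000 in
lemma sift {A E F : Finset G} {q : ℕ} {K τ M l δ : ℝ} (hE : E.Nonempty) (hF : F.Nonempty)
    (hK : 0 < K) (hτ0 : 0 ≤ τ) (hτ : τ * (A.card : ℝ) ^ q ≤ K ^ q / 4) (hM : 1 ≤ M)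
    (hl0 : 0 ≤ l) (hδ : 0 ≤ δ) (hl : l ^ q ≤ δ / 2 * M)
    (hT : M * K ^ q * (E.card : ℝ) ^ 2 * (F.card : ℝ) ^ 2 ≤
      ∑ u ∈ F, ∑ u' ∈ E, ∑ e ∈ E, ∑ f ∈ F, dc (ind A) ((e + u) - (u' + f)) ^ q) :
    ∃ X₁ ⊆ E, ∃ X₂ ⊆ F, ∃ k : G, τ * E.card < X₁.card ∧ τ * F.card < X₂.card ∧
      (((X₁ ×ˢ X₂).filter fun z => dc (ind A) (z.1 - z.2 + k) ≤ l * K).card : ℝ) ≤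
        δ * (X₁.card * X₂.card) := by
  classical
  have hE0 : (0 : ℝ) < E.card := by exact_mod_cast hE.card_pos
  have hF0 : (0 : ℝ) < F.card := by exact_mod_cast hF.card_pos
  set P : Finset (G × G × (Fin q → G)) := F ×ˢ E ×ˢ univ with hP
  set X1 : G × G × (Fin q → G) → Finset G :=
    fun z => E.filter fun e => ∀ i, z.2.2 i + (e + z.1) ∈ A with hX1
  set X2 : G × G × (Fin q → G) → Finset G :=
    fun z => F.filter fun f => ∀ i, z.2.2 i + (z.2.1 + f) ∈ A with hX2
  have c1 : ∀ z, ((X1 z).card : ℝ) = ∑ e ∈ E, JJ A z.2.2 (e + z.1) := by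
    intro z; simp only [hX1, JJ_eq]; rw [card_filter]; push_cast; rfl
  have c2 : ∀ z, ((X2 z).card : ℝ) = ∑ f ∈ F, JJ A z.2.2 (z.2.1 + f) := by
    intro z; simp only [hX2, JJ_eq]; rw [card_filter]; push_cast; rfl
  set T := ∑ u ∈ F, ∑ u' ∈ E, ∑ e ∈ E, ∑ f ∈ F, dc (ind A) ((e + u) - (u' + f)) ^ q with hTdef
  set Z : ℝ := K ^ q * (E.card : ℝ) ^ 2 * (F.card : ℝ) ^ 2 with hZ
  have hZ0 : 0 < Z := by positivity
  have hTZ : M * Z ≤ T := by rw [hZ]; linarith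
  -- total
  have t1 : ∑ z ∈ P, ((X1 z).card : ℝ) * (X2 z).card = T := by
    simp_rw [c1, c2, sum_mul_sum]
    rw [hP, sum_product]
    refine sum_congr rfl fun u _ => ?_
    rw [sum_product]
    refine sum_congr rfl fun u' _ => ?_
    rw [sum_comm]
    refine sum_congr rfl fun e _ => ?_
    rw [sum_comm]
    refine sum_congr rfl fun f _ => ?_
    rw [← sum_JJ_mul A q]
  have s1 : ∑ z ∈ P, ((X1 z).card : ℝ) = F.card * E.card * E.card * (A.card : ℝ) ^ q := by
    simp_rw [c1]
    rw [hP, sum_product]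
    have : ∀ u ∈ F, ∑ y ∈ E ×ˢ (univ : Finset (Fin q → G)), ∑ e ∈ E, JJ A y.2 (e + u) =
        E.card * E.card * (A.card : ℝ) ^ q := by
      intro u _
      rw [sum_product]
      have : ∀ u' ∈ E, ∑ y : Fin q → G, ∑ e ∈ E, JJ A y (e + u) = E.card * (A.card : ℝ) ^ q := by
        intro u' _
        rw [sum_comm]
        simp_rw [sum_JJ]
        simp
      rw [sum_congr rfl this]; simp; ring
    rw [sum_congr rfl this]; simp; ring
  have s2 : ∑ z ∈ P, ((X2 z).card : ℝ) = F.card * E.card * F.card * (A.card : ℝ) ^ q := by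
    simp_rw [c2]
    rw [hP, sum_product]
    have : ∀ u ∈ F, ∑ y ∈ E ×ˢ (univ : Finset (Fin q → G)), ∑ f ∈ F, JJ A y.2 (y.1 + f) =
        E.card * F.card * (A.card : ℝ) ^ q := by
      intro u _
      rw [sum_product]
      have : ∀ u' ∈ E, ∑ y : Fin q → G, ∑ f ∈ F, JJ A y (u' + f) = F.card * (A.card : ℝ) ^ q := by
        intro u' _
        rw [sum_comm]
        simp_rw [sum_JJ]
        simp
      rw [sum_congr rfl this]; simp; ring
    rw [sum_congr rfl this]; simp; ring
  set bad : G × G × (Fin q → G) → ℝ := fun z =>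
    (((X1 z ×ˢ X2 z).filter fun y => dc (ind A) (y.1 - y.2 + (z.1 - z.2.1)) ≤ l * K).card : ℝ)
    with hbad
  have hb : ∑ z ∈ P, bad z ≤ l ^ q * Z := by
    have e1 : ∀ z, bad z = ∑ e ∈ E, ∑ f ∈ F,
        (if dc (ind A) ((e + z.1) - (z.2.1 + f)) ≤ l * K then 1 else 0) *
          (JJ A z.2.2 (e + z.1) * JJ A z.2.2 (z.2.1 + f)) := by
      intro z
      simp only [hbad]
      rw [card_filter, sum_product]
      push_cast
      simp only [hX1, hX2]
      rw [sum_filter]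
      refine sum_congr rfl fun e _ => ?_
      rw [JJ_eq]
      split_ifs with h
      · rw [sum_filter]
        refine sum_congr rfl fun f _ => ?_
        rw [JJ_eq]
        have : e - f + (z.1 - z.2.1) = (e + z.1) - (z.2.1 + f) := by abel
        rw [this]
        split_ifs <;> simp
      · simp
    calc ∑ z ∈ P, bad z = ∑ u ∈ F, ∑ u' ∈ E, ∑ e ∈ E, ∑ f ∈ F,
          (if dc (ind A) ((e + u) - (u' + f)) ≤ l * K then 1 else 0) *
            dc (ind A) ((e + u) - (u' + f)) ^ q := by
          simp_rw [e1]
          rw [hP, sum_product]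
          refine sum_congr rfl fun u _ => ?_
          rw [sum_product]
          refine sum_congr rfl fun u' _ => ?_
          rw [sum_comm]
          refine sum_congr rfl fun e _ => ?_
          rw [sum_comm]
          refine sum_congr rfl fun f _ => ?_
          dsimp only
          by_cases h : dc (ind A) (e + u - (u' + f)) ≤ l * K
          · simp only [h, if_true, one_mul, sum_JJ_mul]
          · simp only [h, if_false, zero_mul, sum_const_zero]
      _ ≤ ∑ u ∈ F, ∑ u' ∈ E, ∑ e ∈ E, ∑ f ∈ F, (l * K) ^ q := by
          refine sum_le_sum fun u _ => sum_le_sum fun u' _ => sum_le_sum fun e _ =>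
            sum_le_sum fun f _ => ?_
          have hd : 0 ≤ dc (ind A) ((e + u) - (u' + f)) :=
            sum_nonneg fun x _ => mul_nonneg (ind_nonneg _ _) (ind_nonneg _ _)
          split_ifs with h
          · rw [one_mul]; gcongr
          · rw [zero_mul]; positivity
      _ = l ^ q * Z := by
          simp [hZ, mul_pow]; ring
  set good := P.filter fun z => τ * E.card < (X1 z).card ∧ τ * F.card < (X2 z).card with hgood
  have hgs : T / 2 ≤ ∑ z ∈ good, ((X1 z).card : ℝ) * (X2 z).card := by
    have : T ≤ ∑ z ∈ good, ((X1 z).card : ℝ) * (X2 z).card +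
        ∑ z ∈ P, (τ * E.card * (X2 z).card + τ * F.card * (X1 z).card) := by
      rw [← t1, hgood, sum_filter, ← sum_add_distrib]
      refine sum_le_sum fun z _ => ?_
      have a0 : (0 : ℝ) ≤ (X1 z).card := by positivity
      have b0 : (0 : ℝ) ≤ (X2 z).card := by positivity
      have a1 : 0 ≤ τ * E.card * (X2 z).card := by positivity
      have a2 : 0 ≤ τ * F.card * (X1 z).card := by positivity
      split_ifs with h
      · linarith
      · rw [not_and_or, not_lt, not_lt] at h
        rcases h with h | h
        · nlinarith
        · nlinarith
    rw [sum_add_distrib, ← Finset.mul_sum, ← Finset.mul_sum, s1, s2] at this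
    have e : τ * E.card * (F.card * E.card * F.card * (A.card : ℝ) ^ q) +
        τ * F.card * (F.card * E.card * E.card * (A.card : ℝ) ^ q) =
        2 * (τ * (A.card : ℝ) ^ q) * ((E.card : ℝ) ^ 2 * (F.card : ℝ) ^ 2) := by ring
    rw [e] at this
    have h2 : 2 * (τ * (A.card : ℝ) ^ q) * ((E.card : ℝ) ^ 2 * (F.card : ℝ) ^ 2) ≤ Z / 2 := by
      calc _ ≤ 2 * (K ^ q / 4) * ((E.card : ℝ) ^ 2 * (F.card : ℝ) ^ 2) := by gcongr
        _ = Z / 2 := by rw [hZ]; ring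
    nlinarith
  have hgn : good.Nonempty := by
    by_contra h
    rw [not_nonempty_iff_eq_empty] at h
    rw [h, sum_empty] at hgs
    nlinarith
  have key : ∑ z ∈ good, bad z ≤ ∑ z ∈ good, δ * (((X1 z).card : ℝ) * (X2 z).card) := by
    calc ∑ z ∈ good, bad z ≤ ∑ z ∈ P, bad z :=
          sum_le_sum_of_subset_of_nonneg (filter_subset _ _) fun _ _ _ => by
            simp only [hbad]; positivity
      _ ≤ l ^ q * Z := hb
      _ ≤ δ / 2 * M * Z := by gcongr
      _ ≤ δ * (T / 2) := by nlinarith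
      _ ≤ _ := by rw [← Finset.mul_sum]; gcongr
  obtain ⟨z, hz, hzz⟩ := exists_le_of_sum_le hgn key
  obtain ⟨_, hz1, hz2⟩ := mem_filter.1 hz
  exact ⟨X1 z, filter_subset _ _, X2 z, filter_subset _ _, z.1 - z.2.1, hz1, hz2, hzz⟩

end Sift

end KM


open Finset

set_option linter.unusedSectionVars false
set_option linter.unusedDecidableInType false

namespace KM

section CS

variable {G : Type*} [AddCommGroup G] [Fintype G] [DecidableEq G]

lemma exp_quad {u : ℝ} (hu : |u| ≤ 1) : Real.exp u ≤ 1 + u + u ^ 2 := by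
  have := Real.abs_exp_sub_one_sub_id_le hu
  rw [abs_le] at this
  linarith [this.2]

/-- one sided Hoeffding bound, counting version -/
lemma hoeffding_one {α : Type*} [DecidableEq α] (X : Finset α) (g : α → ℝ)
    (hg : ∀ x ∈ X, |g x| ≤ 1) (h0 : ∑ x ∈ X, g x = 0) (k : ℕ) {η : ℝ} (hη : 0 ≤ η) (hη1 : η ≤ 2) :
    (((Fintype.piFinset fun _ : Fin k => X).filter fun z => k * η < ∑ i, g (z i)).card : ℝ) ≤
      Real.exp (-(k * η ^ 2 / 4)) * (X.card : ℝ) ^ k := by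
  set lam := η / 2 with hlam
  have h1 : ∑ x ∈ X, Real.exp (lam * g x) ≤ X.card * Real.exp (lam ^ 2) := by
    calc ∑ x ∈ X, Real.exp (lam * g x) ≤ ∑ x ∈ X, (1 + lam * g x + lam ^ 2) := by
          refine sum_le_sum fun x hx => ?_
          have a : |lam * g x| ≤ 1 := by
            rw [abs_mul, abs_of_nonneg (by positivity)]
            have := hg x hx
            nlinarith [abs_nonneg (g x)]
          have b := exp_quad a
          have c : (lam * g x) ^ 2 ≤ lam ^ 2 := by
            rw [mul_pow]
            have : g x ^ 2 ≤ 1 := by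
              rw [← sq_abs]; have := hg x hx; nlinarith [abs_nonneg (g x)]
            nlinarith [sq_nonneg lam]
          linarith
      _ = X.card * (1 + lam ^ 2) := by
          rw [sum_add_distrib, sum_add_distrib, ← Finset.mul_sum, h0]; simp; ring
      _ ≤ _ := by
          gcongr; linarith [Real.add_one_le_exp (lam ^ 2)]
  have h2 : ∑ z ∈ Fintype.piFinset (fun _ : Fin k => X), Real.exp (lam * ∑ i, g (z i)) ≤
      (X.card * Real.exp (lam ^ 2)) ^ k := by
    have : ∀ z : Fin k → α, Real.exp (lam * ∑ i, g (z i)) = ∏ i, Real.exp (lam * g (z i)) := by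
      intro z; rw [Finset.mul_sum, Real.exp_sum]
    simp_rw [this]
    rw [← Finset.prod_univ_sum (fun _ : Fin k => X) (fun _ x => Real.exp (lam * g x))]
    rw [prod_const, card_univ, Fintype.card_fin]
    refine pow_le_pow_left₀ (sum_nonneg fun x _ => (Real.exp_pos _).le) h1 k
  have h3 : (((Fintype.piFinset fun _ : Fin k => X).filter fun z => k * η < ∑ i, g (z i)).card : ℝ)
      * Real.exp (lam * (k * η)) ≤
      ∑ z ∈ Fintype.piFinset (fun _ : Fin k => X), Real.exp (lam * ∑ i, g (z i)) := by
    rw [← nsmul_eq_mul]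
    refine (card_nsmul_le_sum _ (fun z => Real.exp (lam * ∑ i, g (z i))) _ ?_).trans
      (sum_le_sum_of_subset_of_nonneg (filter_subset _ _) fun _ _ _ => (Real.exp_pos _).le)
    intro z hz
    apply Real.exp_le_exp.2
    have := (mem_filter.1 hz).2
    gcongr
  have h4 := h3.trans h2
  rw [mul_pow, ← Real.exp_nat_mul] at h4
  have e : Real.exp (k * lam ^ 2) = Real.exp (-(k * η ^ 2 / 4)) * Real.exp (lam * (k * η)) := by
    rw [← Real.exp_add]; congr 1; rw [hlam]; ring
  rw [e] at h4
  have := Real.exp_pos (lam * (k * η))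
  refine le_of_mul_le_mul_right ?_ this
  linarith

lemma hoeffding_two {α : Type*} [DecidableEq α] (X : Finset α) (g : α → ℝ)
    (hg : ∀ x ∈ X, |g x| ≤ 1) (h0 : ∑ x ∈ X, g x = 0) (k : ℕ) {η : ℝ} (hη : 0 ≤ η) (hη1 : η ≤ 2) :
    (((Fintype.piFinset fun _ : Fin k => X).filter fun z => k * η < |∑ i, g (z i)|).card : ℝ) ≤
      2 * Real.exp (-(k * η ^ 2 / 4)) * (X.card : ℝ) ^ k := by
  have a := hoeffding_one X g hg h0 k hη hη1
  have b := hoeffding_one X (fun x => -g x) (by simpa using hg) (by simp [h0]) k hη hη1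
  have : (((Fintype.piFinset fun _ : Fin k => X).filter fun z => k * η < |∑ i, g (z i)|)) ⊆
      ((Fintype.piFinset fun _ : Fin k => X).filter fun z => k * η < ∑ i, g (z i)) ∪
      ((Fintype.piFinset fun _ : Fin k => X).filter fun z => k * η < ∑ i, -g (z i)) := by
    intro z hz
    rw [mem_filter] at hz
    rw [mem_union, mem_filter, mem_filter]
    rcases lt_abs.1 hz.2 with h | h
    · exact Or.inl ⟨hz.1, h⟩
    · right; refine ⟨hz.1, ?_⟩; rw [sum_neg_distrib]; exact h
  have c : ((((Fintype.piFinset fun _ : Fin k => X).filter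
      fun z => k * η < |∑ i, g (z i)|)).card : ℝ) ≤
      ((Fintype.piFinset fun _ : Fin k => X).filter fun z => k * η < ∑ i, g (z i)).card +
      ((Fintype.piFinset fun _ : Fin k => X).filter fun z => k * η < ∑ i, -g (z i)).card := by
    exact_mod_cast (card_le_card this).trans (card_union_le _ _)
  linarith

/-- average of `ind S (y - x)` over `x ∈ X` -/
noncomputable def psi (S X : Finset G) (y : G) : ℝ := (∑ x ∈ X, ind S (y - x)) / X.card

lemma psi_nonneg (S X : Finset G) (y : G) : 0 ≤ psi S X y :=
  div_nonneg (sum_nonneg fun _ _ => ind_nonneg _ _) (by positivity)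

lemma psi_le_one (S X : Finset G) (y : G) : psi S X y ≤ 1 := by
  unfold psi
  refine div_le_one_of_le₀ ?_ (by positivity)
  calc _ ≤ ∑ x ∈ X, (1 : ℝ) := sum_le_sum fun _ _ => ind_le_one _ _
    _ = _ := by simp

lemma croot_sisask {S X F Fp Bs Y : Finset G} {τ η : ℝ} {k : ℕ} (hk : 0 < k)
    (hB : Bs.Nonempty) (hX : X.Nonempty) (hXF : X ⊆ F) (hτ0 : 0 < τ) (hτ : τ * F.card ≤ X.card)
    (hη : 0 < η) (hη1 : η ≤ 1)
    (hFp : ∀ x ∈ F, ∀ t ∈ Bs, x + t ∈ Fp) (hFpc : (Fp.card : ℝ) ≤ 2 * F.card)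
    (hY : ∀ s ∈ S, ∀ x ∈ X, s + x ∈ Y) :
    ∃ T ⊆ Bs, Bs.card * (τ / 2) ^ k / 2 ≤ T.card ∧ ∀ t ∈ T, ∀ t' ∈ T,
      ((univ.filter fun y => 2 * η < |psi S X (y + t - t') - psi S X y|).card : ℝ) ≤
        8 * Y.card * Real.exp (-(k * η ^ 2 / 4)) := by
  classical
  set n : ℝ := (X.card : ℝ) with hn
  have hn0 : 0 < n := by rw [hn]; exact_mod_cast hX.card_pos
  have hk0 : (0 : ℝ) < k := by exact_mod_cast hk
  set P := Fintype.piFinset fun _ : Fin k => X with hP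
  have hPc : (P.card : ℝ) = n ^ k := by
    rw [hP, Fintype.card_piFinset]; simp [hn]
  set κ := Real.exp (-(k * η ^ 2 / 4)) with hκ
  have hκ0 : 0 < κ := Real.exp_pos _
  set sm : (Fin k → G) → G → ℝ := fun z y => (∑ i, ind S (y - z i)) / k with hsm
  set bad : (Fin k → G) → Finset G :=
    fun z => univ.filter fun y => η < |sm z y - psi S X y| with hbad
  have hpt : ∀ y, ((P.filter fun z => η < |sm z y - psi S X y|).card : ℝ) ≤
      if y ∈ Y then 2 * κ * n ^ k else 0 := by
    intro y
    split_ifs with hy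
    · have := hoeffding_two X (fun x => ind S (y - x) - psi S X y) (fun x _ => by
        rw [abs_le]; constructor <;> linarith [ind_nonneg S (y - x), ind_le_one S (y - x),
          psi_nonneg S X y, psi_le_one S X y]) (by
        rw [sum_sub_distrib, sum_const, nsmul_eq_mul]; unfold psi
        rw [mul_div_cancel₀]
        · ring
        · exact hn0.ne') k hη.le (by linarith)
      refine le_trans ?_ this
      have hc : (P.filter fun z => η < |sm z y - psi S X y|).card ≤ (P.filter fun z =>
          k * η < |∑ i, (ind S (y - z i) - psi S X y)|).card := by
        refine card_le_card (monotone_filter_right _ ?_)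
        intro z _ h
        rw [sum_sub_distrib, sum_const, card_univ, Fintype.card_fin, nsmul_eq_mul]
        have e : ∑ i, ind S (y - z i) - k * psi S X y = k * (sm z y - psi S X y) := by
          simp only [hsm]; field_simp
        rw [e, abs_mul, abs_of_pos hk0]
        exact mul_lt_mul_of_pos_left h hk0
      exact_mod_cast hc
    · have h0 : ∀ x ∈ X, ind S (y - x) = 0 := by
        intro x hx
        unfold ind
        rw [if_neg]
        intro h
        exact hy (by simpa using hY _ h x hx)
      have : (P.filter fun z => η < |sm z y - psi S X y|) = ∅ := by
        rw [filter_eq_empty_iff]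
        intro z hz
        have h1 : psi S X y = 0 := by
          unfold psi; rw [sum_eq_zero h0, zero_div]
        have h2 : sm z y = 0 := by
          simp only [hsm]
          rw [sum_eq_zero, zero_div]
          intro i _
          exact h0 _ (Fintype.mem_piFinset.1 hz i)
        rw [h1, h2]; simp [hη.le]
      rw [this]; simp
  have htot : ∑ z ∈ P, ((bad z).card : ℝ) ≤ 2 * κ * Y.card * n ^ k := by
    have : ∑ z ∈ P, ((bad z).card : ℝ) =
        ∑ y, ((P.filter fun z => η < |sm z y - psi S X y|).card : ℝ) := by
      simp only [hbad, card_filter]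
      push_cast
      rw [sum_comm]
    rw [this]
    refine (sum_le_sum fun y _ => hpt y).trans ?_
    rw [sum_ite_mem, univ_inter, sum_const, nsmul_eq_mul]
    linarith
  set L := P.filter fun z => ((bad z).card : ℝ) ≤ 4 * κ * Y.card with hL
  have hLc : n ^ k / 2 ≤ L.card := by
    by_cases hY0 : (Y.card : ℝ) = 0
    · have : L = P := by
        rw [hL, filter_eq_self]
        intro z hz
        rw [hY0] at htot ⊢
        have h1 := single_le_sum (f := fun z => ((bad z).card : ℝ)) (fun z _ => by positivity) hz
        linarith
      rw [this, hPc]; linarith [pow_pos hn0 k]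
    have hY1 : (0 : ℝ) < Y.card := lt_of_le_of_ne (by positivity) (Ne.symm hY0)
    have h1 : ((P.card : ℝ) - L.card) * (4 * κ * Y.card) ≤ 2 * κ * Y.card * n ^ k := by
      refine le_trans ?_ htot
      have : ((P.card : ℝ) - L.card) = (P.filter fun z => ¬ ((bad z).card : ℝ) ≤ 4 * κ * Y.card).card := by
        rw [← card_filter_add_card_filter_not (s := P) (p := fun z => ((bad z).card : ℝ) ≤ 4 * κ * Y.card)]
        push_cast; rw [← hL]; ring
      rw [this, ← nsmul_eq_mul]
      refine (card_nsmul_le_sum _ (fun z => ((bad z).card : ℝ)) _ ?_).trans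
        (sum_le_sum_of_subset_of_nonneg (filter_subset _ _) fun _ _ _ => by positivity)
      intro z hz
      exact (not_le.1 (mem_filter.1 hz).2).le
    rw [hPc] at h1
    have h2 : (2 * κ * Y.card) * (2 * (n ^ k - L.card)) ≤ (2 * κ * Y.card) * n ^ k := by linarith
    have := le_of_mul_le_mul_left h2 (by positivity)
    linarith
  -- pigeonhole
  set Q := Fintype.piFinset fun _ : Fin k => Fp with hQ
  have hQc : (Q.card : ℝ) ≤ (2 * F.card) ^ k := by
    rw [hQ, Fintype.card_piFinset]; simp only [prod_const, card_univ, Fintype.card_fin]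
    push_cast; gcongr
  set TT : (Fin k → G) → Finset G := fun w => Bs.filter fun t => (fun i => w i - t) ∈ L with hTT
  have hsum : (L.card : ℝ) * Bs.card ≤ ∑ w ∈ Q, ((TT w).card : ℝ) := by
    have e1 : ∑ w ∈ Q, ((TT w).card : ℝ) =
        ∑ t ∈ Bs, ((Q.filter fun w => (fun i => w i - t) ∈ L).card : ℝ) := by
      simp only [hTT, card_filter]
      push_cast
      rw [sum_comm]
    rw [e1]
    have : ∀ t ∈ Bs, (L.card : ℝ) ≤ ((Q.filter fun w => (fun i => w i - t) ∈ L).card : ℝ) := by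
      intro t ht
      have : L.card ≤ (Q.filter fun w => (fun i => w i - t) ∈ L).card := by
        refine card_le_card_of_injOn (fun z i => z i + t) ?_ ?_
        · intro z hz
          simp only [mem_coe, mem_filter, hQ, Fintype.mem_piFinset, add_sub_cancel_right]
          refine ⟨fun i => hFp _ (hXF ?_) t ht, hz⟩
          exact Fintype.mem_piFinset.1 (mem_filter.1 hz).1 i
        · intro z _ z' _ h
          funext i
          have := congrFun h i
          simpa using this
      exact_mod_cast this
    calc (L.card : ℝ) * Bs.card = ∑ t ∈ Bs, (L.card : ℝ) := by simp [mul_comm]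
      _ ≤ _ := sum_le_sum this
  have hF0 : 0 < (F.card : ℝ) := lt_of_lt_of_le hn0 (by rw [hn]; exact_mod_cast card_le_card hXF)
  have hex : ∃ w ∈ Q, Bs.card * (τ / 2) ^ k / 2 ≤ (TT w).card := by
    by_contra hcon
    push Not at hcon
    have hQn : Q.Nonempty := by
      by_contra hne
      rw [not_nonempty_iff_eq_empty] at hne
      rw [hne, sum_empty] at hsum
      have : (0 : ℝ) < Bs.card := by exact_mod_cast hB.card_pos
      have h3 : 0 < (L.card : ℝ) := by linarith [pow_pos hn0 k]
      nlinarith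
    have h1 : ∑ w ∈ Q, ((TT w).card : ℝ) < ∑ w ∈ Q, Bs.card * (τ / 2) ^ k / 2 :=
      sum_lt_sum_of_nonempty hQn fun w hw => hcon w hw
    rw [sum_const, nsmul_eq_mul] at h1
    have h2 : (Q.card : ℝ) * (Bs.card * (τ / 2) ^ k / 2) ≤ n ^ k / 2 * Bs.card := by
      calc _ ≤ (2 * F.card : ℝ) ^ k * (Bs.card * (τ / 2) ^ k / 2) := by gcongr
        _ = (τ * F.card) ^ k / 2 * Bs.card := by
          have : (τ * F.card : ℝ) ^ k = (2 * F.card) ^ k * (τ / 2) ^ k := by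
            rw [← mul_pow]; ring_nf
          rw [this]; ring
        _ ≤ _ := by gcongr
    have h3 : n ^ k / 2 * Bs.card ≤ L.card * Bs.card := by gcongr
    linarith
  obtain ⟨w, -, hw⟩ := hex
  refine ⟨TT w, filter_subset _ _, hw, ?_⟩
  intro t ht t' ht'
  have key : ∀ t ∈ TT w, ∀ y, y ∉ bad (fun i => w i - t) → |sm w (y + t) - psi S X y| ≤ η := by
    intro t ht y hy
    simp only [hbad, mem_filter, mem_univ, true_and, not_lt] at hy
    have : sm (fun i => w i - t) y = sm w (y + t) := by
      simp only [hsm]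
      congr 1
      refine sum_congr rfl fun i _ => ?_
      congr 1; abel
    rwa [this] at hy
  have hbt : ∀ t ∈ TT w, ((bad (fun i => w i - t)).card : ℝ) ≤ 4 * κ * Y.card := by
    intro t ht
    exact (mem_filter.1 (mem_filter.1 ht).2).2
  have hsub : (univ.filter fun y => 2 * η < |psi S X (y + t - t') - psi S X y|) ⊆
      bad (fun i => w i - t) ∪ (bad (fun i => w i - t')).image fun y => y - t + t' := by
    intro y hy
    by_contra hn
    rw [mem_union, not_or, mem_image] at hn
    have h1 := key t ht y hn.1
    have h2 := key t' ht' (y + t - t') (fun h => hn.2 ⟨_, h, by abel⟩)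
    rw [sub_add_cancel] at h2
    have h3 := (mem_filter.1 hy).2
    rw [abs_le] at h1 h2
    rcases lt_abs.1 h3 with h | h <;> linarith [h1.1, h1.2, h2.1, h2.2]
  calc ((univ.filter fun y => 2 * η < |psi S X (y + t - t') - psi S X y|).card : ℝ)
      ≤ (bad (fun i => w i - t)).card + (bad (fun i => w i - t')).card := by
        have := (card_le_card hsub).trans ((card_union_le _ _).trans
          (Nat.add_le_add_left card_image_le _))
        exact_mod_cast this
    _ ≤ _ := by linarith [hbt t ht, hbt t' ht']

end CS

end KM


open Finset

set_option linter.unusedSectionVars false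
set_option linter.unusedDecidableInType false

namespace KM

section Chang

variable {G : Type*} [AddCommGroup G] [Fintype G] [DecidableEq G]

/-- state in the entropy argument -/
structure Ent (Bs T : Finset G) (n : ℕ) (u : G → ℝ) (Δ : Finset (AddChar G ℂ)) : Prop where
  hΔ : Δ.card ≤ n
  lo : ∀ x, (7 / 8) ^ n ≤ u x
  hi : ∀ x, u x ≤ (9 / 8) ^ n
  sh : ∀ ζ : ℝ, 0 ≤ ζ → ∀ b ∈ bohr Δ ζ, ∀ x, u (x + b) ≤ Real.exp (n * ζ) * u x
  en : Real.log (∑ b ∈ Bs, u b) - (∑ t ∈ T, Real.log (u t)) / T.card ≤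
    Real.log Bs.card - n / 80

lemma Ent.pos {Bs T : Finset G} {n : ℕ} {u : G → ℝ} {Δ : Finset (AddChar G ℂ)}
    (h : Ent Bs T n u Δ) (x : G) : 0 < u x := lt_of_lt_of_le (by positivity) (h.lo x)

lemma Ent.bound {Bs T : Finset G} {n : ℕ} {u : G → ℝ} {Δ : Finset (AddChar G ℂ)}
    (h : Ent Bs T n u Δ) (hT : T ⊆ Bs) (hT0 : T.Nonempty) :
    (n : ℝ) / 80 ≤ Real.log Bs.card - Real.log T.card := by
  have hn : (0 : ℝ) < T.card := by exact_mod_cast hT0.card_pos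
  set Z := ∑ b ∈ Bs, u b with hZ
  have hTZ : ∑ t ∈ T, u t ≤ Z := sum_le_sum_of_subset_of_nonneg hT fun x _ _ => (h.pos x).le
  have hZ0 : 0 < Z := lt_of_lt_of_le (sum_pos (fun x _ => h.pos x) hT0) hTZ
  have h1 : ∑ t ∈ T, Real.log (u t) ≤ T.card * (Real.log Z - Real.log T.card) := by
    have : ∀ t ∈ T, Real.log (u t) ≤ (Real.log Z - Real.log T.card - 1) + T.card / Z * u t := by
      intro t _
      have h2 := Real.log_le_sub_one_of_pos (x := T.card / Z * u t)
        (mul_pos (div_pos hn hZ0) (h.pos t))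
      rw [Real.log_mul (div_pos hn hZ0).ne' (h.pos t).ne', Real.log_div hn.ne' hZ0.ne'] at h2
      linarith
    refine (sum_le_sum this).trans ?_
    rw [sum_add_distrib, ← Finset.mul_sum, sum_const, nsmul_eq_mul]
    have : (T.card : ℝ) / Z * ∑ t ∈ T, u t ≤ T.card / Z * Z := by gcongr
    rw [div_mul_cancel₀ _ hZ0.ne'] at this
    linarith
  have h2 : (∑ t ∈ T, Real.log (u t)) / T.card ≤ Real.log Z - Real.log T.card := by
    rw [div_le_iff₀ hn]; linarith
  have := h.en
  linarith

lemma Ent.zero (Bs T : Finset G) : Ent Bs T 0 (fun _ => 1) ∅ where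
  hΔ := by simp
  lo := by simp
  hi := by simp
  sh := by simp
  en := by simp

lemma Ent.step {Bs T : Finset G} {n : ℕ} {u : G → ℝ} {Δ : Finset (AddChar G ℂ)}
    (h : Ent Bs T n u Δ) (hT : T ⊆ Bs) (hT0 : T.Nonempty) {γ : AddChar G ℂ}
    (h1 : (T.card : ℝ) / 2 ≤ ‖∑ t ∈ T, γ t‖)
    (h2 : ‖∑ b ∈ Bs, (u b : ℂ) * γ b‖ ≤ (∑ b ∈ Bs, u b) / 4) :
    ∃ u' Δ', Ent Bs T (n + 1) u' Δ' := by
  classical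
  have hn : (0 : ℝ) < T.card := by exact_mod_cast hT0.card_pos
  set s := ∑ t ∈ T, γ t with hs
  have hs0 : s ≠ 0 := by
    intro h0; rw [h0, norm_zero] at h1; linarith
  have hsn : ‖s‖ ≠ 0 := norm_ne_zero_iff.2 hs0
  set ω : ℂ := (starRingEnd ℂ) s / ‖s‖ with hω
  have hω1 : ‖ω‖ = 1 := by
    rw [hω, norm_div, RCLike.norm_conj, Complex.norm_real, norm_norm, div_self hsn]
  have hωs : (ω * s).re = ‖s‖ := by
    have : ω * s = ‖s‖ := by
      rw [hω, div_mul_eq_mul_div, mul_comm, Complex.mul_conj, Complex.normSq_eq_norm_sq]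
      push_cast
      field_simp
    rw [this]; simp
  set c : G → ℝ := fun x => (ω * γ x).re with hc
  have hc1 : ∀ x, |c x| ≤ 1 := by
    intro x
    have := Complex.abs_re_le_norm (ω * γ x)
    rwa [norm_mul, hω1, norm_char, one_mul] at this
  have hlo : ∀ x, 7 / 8 ≤ 1 + c x / 8 := fun x => by have := abs_le.1 (hc1 x); linarith
  have hhi : ∀ x, 1 + c x / 8 ≤ 9 / 8 := fun x => by have := abs_le.1 (hc1 x); linarith
  refine ⟨fun x => u x * (1 + c x / 8), insert γ Δ, ?_, ?_, ?_, ?_, ?_⟩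
  · exact (card_insert_le _ _).trans (Nat.add_le_add_right h.hΔ 1)
  · intro x
    rw [pow_succ]
    exact mul_le_mul (h.lo x) (hlo x) (by norm_num) (h.pos x).le
  · intro x
    rw [pow_succ]
    exact mul_le_mul (h.hi x) (hhi x) (by linarith [hlo x]) (by positivity)
  · intro ζ hζ b hb x
    have hb1 := h.sh ζ hζ b (bohr_anti (subset_insert _ _) hb) x
    have hb2 := mem_bohr.1 hb γ (mem_insert_self _ _)
    have e : c (x + b) - c x = (ω * γ x * (γ b - 1)).re := by
      simp only [hc]; rw [← Complex.sub_re, AddChar.map_add_eq_mul]; congr 1; ring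
    have e2 : c (x + b) - c x ≤ ζ := by
      rw [e]
      refine (Complex.re_le_norm _).trans ?_
      rw [norm_mul, norm_mul, hω1, norm_char]; linarith
    have e3 : 1 + c (x + b) / 8 ≤ Real.exp ζ * (1 + c x / 8) := by
      have := Real.add_one_le_exp ζ
      nlinarith [hlo x]
    have e4 : Real.exp ((n + 1 : ℕ) * ζ) = Real.exp (n * ζ) * Real.exp ζ := by
      rw [← Real.exp_add]; congr 1; push_cast; ring
    rw [e4]
    calc u (x + b) * (1 + c (x + b) / 8) ≤ (Real.exp (n * ζ) * u x) * (Real.exp ζ * (1 + c x / 8)) :=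
          mul_le_mul hb1 e3 (by linarith [hlo (x + b)]) (mul_nonneg (Real.exp_pos _).le (h.pos x).le)
      _ = _ := by ring
  · set Z := ∑ b ∈ Bs, u b with hZ
    have hZ0 : 0 < Z := sum_pos (fun x _ => h.pos x) (hT0.mono hT)
    have z1 : ∑ b ∈ Bs, u b * (1 + c b / 8) = Z + (ω * ∑ b ∈ Bs, (u b : ℂ) * γ b).re / 8 := by
      rw [Finset.mul_sum, Complex.re_sum, hZ, sum_div, ← sum_add_distrib]
      refine sum_congr rfl fun b _ => ?_
      have : ω * ((u b : ℂ) * γ b) = (u b : ℂ) * (ω * γ b) := by ring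
      rw [this, Complex.re_ofReal_mul]
      simp only [hc]; ring
    have z2 : ∑ b ∈ Bs, u b * (1 + c b / 8) ≤ Z * (33 / 32) := by
      rw [z1]
      have := (Complex.re_le_norm (ω * ∑ b ∈ Bs, (u b : ℂ) * γ b))
      rw [norm_mul, hω1, one_mul] at this
      linarith
    have z3 : 0 < ∑ b ∈ Bs, u b * (1 + c b / 8) :=
      sum_pos (fun x _ => mul_pos (h.pos x) (by linarith [hlo x])) (hT0.mono hT)
    have z4 : Real.log (∑ b ∈ Bs, u b * (1 + c b / 8)) ≤ Real.log Z + 1 / 32 := by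
      refine (Real.log_le_log z3 z2).trans ?_
      rw [Real.log_mul hZ0.ne' (by norm_num)]
      have := Real.log_le_sub_one_of_pos (x := 33 / 32) (by norm_num)
      linarith
    have t1 : ∑ t ∈ T, c t = ‖s‖ := by
      rw [← hωs, hs, Finset.mul_sum, Complex.re_sum]
    have t2 : ∀ t ∈ T, Real.log (u t) + (c t / 8 - 1 / 56) ≤ Real.log (u t * (1 + c t / 8)) := by
      intro t _
      have hp : 0 < 1 + c t / 8 := by linarith [hlo t]
      rw [Real.log_mul (h.pos t).ne' hp.ne']
      have := Real.one_sub_inv_le_log_of_pos hp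
      have h5 : c t / 8 - 1 / 56 ≤ 1 - (1 + c t / 8)⁻¹ := by
        have e : 1 - (1 + c t / 8)⁻¹ = (c t / 8) / (1 + c t / 8) := by
          rw [eq_div_iff hp.ne', sub_mul, inv_mul_cancel₀ hp.ne']; ring
        rw [e, le_div_iff₀ hp]
        have := abs_le.1 (hc1 t)
        nlinarith
      linarith
    have t3 : (∑ t ∈ T, Real.log (u t)) + ((T.card : ℝ) / 16 - T.card / 56) ≤
        ∑ t ∈ T, Real.log (u t * (1 + c t / 8)) := by
      refine le_trans ?_ (sum_le_sum t2)
      rw [sum_add_distrib, sum_sub_distrib, ← sum_div, t1]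
      simp only [sum_const, nsmul_eq_mul]
      linarith
    have t4 : (∑ t ∈ T, Real.log (u t)) / T.card + (1 / 16 - 1 / 56) ≤
        (∑ t ∈ T, Real.log (u t * (1 + c t / 8))) / T.card := by
      rw [le_div_iff₀ hn, add_mul, div_mul_cancel₀ _ hn.ne']; linarith
    have := h.en
    push_cast
    linarith

lemma ent_exists {Bs T : Finset G} (hT : T ⊆ Bs) (hT0 : T.Nonempty) :
    ∃ n u Δ, Ent Bs T n u Δ ∧ ∀ γ : AddChar G ℂ, (T.card : ℝ) / 2 ≤ ‖∑ t ∈ T, γ t‖ →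
      (∑ b ∈ Bs, u b) / 4 < ‖∑ b ∈ Bs, (u b : ℂ) * γ b‖ := by
  by_contra hcon
  push Not at hcon
  have : ∀ n, ∃ u Δ, Ent Bs T n u Δ := by
    intro n
    induction n with
    | zero => exact ⟨_, _, Ent.zero Bs T⟩
    | succ n ih =>
      obtain ⟨u, Δ, h⟩ := ih
      obtain ⟨γ, h1, h2⟩ := hcon n u Δ h
      exact h.step hT hT0 h1 h2
  obtain ⟨n, hn⟩ := exists_nat_gt (80 * (Real.log Bs.card - Real.log T.card))
  obtain ⟨u, Δ, h⟩ := this n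
  have := h.bound hT hT0
  linarith

lemma chang {Bs T : Finset G} (hT : T ⊆ Bs) (hT0 : T.Nonempty) :
    ∃ (n : ℕ) (Δ : Finset (AddChar G ℂ)), Δ.card ≤ n ∧
      (n : ℝ) / 80 ≤ Real.log Bs.card - Real.log T.card ∧
      ∀ (ζ ε : ℝ), 0 ≤ ζ → 0 ≤ ε → ∀ b ∈ bohr Δ ζ,
        ((Bs.filter fun x => x + b ∉ Bs).card : ℝ) ≤ ε * Bs.card →
        ((Bs.filter fun x => x - b ∉ Bs).card : ℝ) ≤ ε * Bs.card →
        ∀ γ : AddChar G ℂ, (T.card : ℝ) / 2 ≤ ‖∑ t ∈ T, γ t‖ →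
          ‖γ b - 1‖ ≤ 4 * ((Real.exp (n * ζ) - 1) + 2 * ε * 2 ^ n) := by
  obtain ⟨n, u, Δ, h, hγ⟩ := ent_exists hT hT0
  refine ⟨n, Δ, h.hΔ, h.bound hT hT0, ?_⟩
  intro ζ ε hζ hε b hb hb1 hb2 γ hγ1
  have hg := hγ γ hγ1
  set Z := ∑ b ∈ Bs, u b with hZ
  have hZ0 : 0 < Z := sum_pos (fun x _ => h.pos x) (hT0.mono hT)
  set f : G → ℝ := fun x => u x * ind Bs x with hf
  set W := ∑ b ∈ Bs, (u b : ℂ) * γ b with hW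
  set E := Real.exp (n * ζ) - 1 with hE
  have hE0 : 0 ≤ E := by
    have := Real.add_one_le_exp (n * ζ)
    have : 0 ≤ n * ζ := by positivity
    rw [hE]; linarith
  have hWf : W = ∑ x, (f x : ℂ) * γ x := by
    rw [hW, ← sum_filter_add_sum_filter_not univ (fun x => x ∈ Bs) (fun x => (f x : ℂ) * γ x)]
    rw [sum_eq_zero (s := univ.filter fun x => x ∉ Bs), add_zero]
    · rw [filter_univ_mem]
      refine sum_congr rfl fun x hx => ?_
      simp [hf, ind, hx]
    · intro x hx
      have := (mem_filter.1 hx).2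
      simp [hf, ind, this]
  have e1 : (γ b - 1) * W = ∑ y, ((f (y - b) - f y : ℝ) : ℂ) * γ y := by
    rw [sub_mul, one_mul, hWf, Finset.mul_sum]
    have : ∑ i, γ b * ((f i : ℂ) * γ i) = ∑ y, (f (y - b) : ℂ) * γ y := by
      rw [← Equiv.sum_comp (Equiv.addRight b) (fun y => (f (y - b) : ℂ) * γ y)]
      refine sum_congr rfl fun x _ => ?_
      simp only [Equiv.coe_addRight, add_sub_cancel_right, AddChar.map_add_eq_mul]
      ring
    rw [this, ← sum_sub_distrib]
    refine sum_congr rfl fun y _ => ?_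
    push_cast; ring
  have e2 : ‖γ b - 1‖ * ‖W‖ ≤ ∑ y, |f (y - b) - f y| := by
    rw [← norm_mul, e1]
    refine (norm_sum_le _ _).trans (le_of_eq ?_)
    refine sum_congr rfl fun y _ => ?_
    rw [norm_mul, norm_char, mul_one, Complex.norm_real, Real.norm_eq_abs]
  have hnb : -b ∈ bohr Δ ζ := neg_mem_bohr.2 hb
  have e3 : ∀ y, |f (y - b) - f y| ≤ E * f y +
      (9 / 8) ^ n * ind (Bs.filter fun x => x - b ∉ Bs) y +
      (9 / 8) ^ n * ind (Bs.filter fun x => x + b ∉ Bs) (y - b) := by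
    intro y
    have p1 : (0 : ℝ) ≤ (9 / 8) ^ n * ind (Bs.filter fun x => x - b ∉ Bs) y :=
      mul_nonneg (by positivity) (ind_nonneg _ _)
    have p2 : (0 : ℝ) ≤ (9 / 8) ^ n * ind (Bs.filter fun x => x + b ∉ Bs) (y - b) :=
      mul_nonneg (by positivity) (ind_nonneg _ _)
    have p3 : 0 ≤ E * f y := mul_nonneg hE0 (mul_nonneg (h.pos y).le (ind_nonneg _ _))
    by_cases hy : y ∈ Bs
    · by_cases hyb : y - b ∈ Bs
      · have q1 := h.sh ζ hζ _ hnb y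
        have q2 := h.sh ζ hζ _ hb (y - b)
        rw [sub_add_cancel] at q2
        rw [← sub_eq_add_neg] at q1
        have r : |f (y - b) - f y| ≤ E * f y := by
          simp only [hf, ind, hy, hyb, if_true, mul_one]
          rw [abs_le]
          have hy0 := h.pos y
          have hyb0 := h.pos (y - b)
          have hEe : Real.exp (n * ζ) = 1 + E := by rw [hE]; ring
          rw [hEe] at q1 q2
          constructor
          · by_cases hlt : u y ≤ u (y - b)
            · nlinarith
            · nlinarith
          · nlinarith
        linarith
      · have r : |f (y - b) - f y| ≤ (9 / 8) ^ n * ind (Bs.filter fun x => x - b ∉ Bs) y := by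
          simp only [hf, ind, hy, hyb, if_true, if_false, mul_one, mul_zero, mem_filter, zero_sub,
            abs_neg, not_false_eq_true, and_self]
          rw [abs_of_pos (h.pos y)]; exact h.hi y
        linarith
    · by_cases hyb : y - b ∈ Bs
      · have r : |f (y - b) - f y| ≤ (9 / 8) ^ n * ind (Bs.filter fun x => x + b ∉ Bs) (y - b) := by
          simp only [hf, ind, hy, hyb, if_true, if_false, mul_one, mul_zero, mem_filter, sub_zero,
            sub_add_cancel, not_false_eq_true, and_self]
          rw [abs_of_pos (h.pos _)]; exact h.hi _
        linarith
      · have r : |f (y - b) - f y| = 0 := by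
          simp [hf, ind, hy, hyb]
        linarith
  have e4 : ∑ y, f y = Z := by
    simp only [hf, hZ, ind]; simp [Finset.sum_ite_mem]
  have e5 : ∑ y, |f (y - b) - f y| ≤ E * Z + (9 / 8) ^ n * (ε * Bs.card) +
      (9 / 8) ^ n * (ε * Bs.card) := by
    refine (sum_le_sum fun y _ => e3 y).trans ?_
    rw [sum_add_distrib, sum_add_distrib, ← Finset.mul_sum, ← Finset.mul_sum, ← Finset.mul_sum, e4,
      sum_ind]
    have : ∑ y, ind (Bs.filter fun x => x + b ∉ Bs) (y - b) =
        (Bs.filter fun x => x + b ∉ Bs).card := by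
      rw [← sum_ind, ← Equiv.sum_comp (Equiv.subRight b) (ind _)]; rfl
    rw [this]
    gcongr
  have e6 : (9 / 8) ^ n * (Bs.card : ℝ) ≤ 2 ^ n * Z := by
    have : (7 / 8 : ℝ) ^ n * Bs.card ≤ Z := by
      rw [hZ, mul_comm, ← nsmul_eq_mul]
      exact card_nsmul_le_sum _ _ _ fun x _ => h.lo x
    calc (9 / 8 : ℝ) ^ n * (Bs.card : ℝ) ≤ (2 * (7 / 8)) ^ n * Bs.card := by
          gcongr; norm_num
      _ = 2 ^ n * ((7 / 8 : ℝ) ^ n * Bs.card) := by rw [mul_pow]; ring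
      _ ≤ _ := by gcongr
  have e7 : ‖γ b - 1‖ * (Z / 4) ≤ E * Z + 2 * ε * 2 ^ n * Z := by
    calc _ ≤ ‖γ b - 1‖ * ‖W‖ := by gcongr
      _ ≤ _ := e2
      _ ≤ _ := e5
      _ ≤ _ := by nlinarith
  have e8 : ‖γ b - 1‖ * Z ≤ (4 * (E + 2 * ε * 2 ^ n)) * Z := by linarith
  exact le_of_mul_le_mul_right e8 hZ0

end Chang

end KM


open Finset

set_option linter.unusedSectionVars false
set_option linter.unusedDecidableInType false

namespace KM

section Fou

variable {G : Type*} [AddCommGroup G] [Fintype G] [DecidableEq G]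

/-- iterated averaging over differences of `T` -/
noncomputable def Pit (T : Finset G) : ℕ → (G → ℝ) → G → ℝ
  | 0, f => f
  | r + 1, f => fun x => (∑ t ∈ T, ∑ t' ∈ T, Pit T r f (x + t - t')) / (T.card : ℝ) ^ 2

lemma avg_le {T : Finset G} (hT : T.Nonempty) (g : G → G → ℝ) {c : ℝ}
    (h : ∀ t ∈ T, ∀ t' ∈ T, c ≤ g t t') : c ≤ (∑ t ∈ T, ∑ t' ∈ T, g t t') / (T.card : ℝ) ^ 2 := by
  have hn : (0 : ℝ) < T.card := by exact_mod_cast hT.card_pos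
  rw [le_div_iff₀ (by positivity)]
  calc c * (T.card : ℝ) ^ 2 = ∑ t ∈ T, ∑ t' ∈ T, c := by simp; ring
    _ ≤ _ := sum_le_sum fun t ht => sum_le_sum fun t' ht' => h t ht t' ht'

lemma exists_ge_avg {T : Finset G} (hT : T.Nonempty) (g : G → G → ℝ) :
    ∃ t ∈ T, ∃ t' ∈ T, (∑ t ∈ T, ∑ t' ∈ T, g t t') / (T.card : ℝ) ^ 2 ≤ g t t' := by
  by_contra! hcon
  set c := (∑ t ∈ T, ∑ t' ∈ T, g t t') / (T.card : ℝ) ^ 2 with hc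
  have hn : (0 : ℝ) < T.card := by exact_mod_cast hT.card_pos
  have h : ∑ t ∈ T, ∑ t' ∈ T, g t t' < ∑ t ∈ T, ∑ t' ∈ T, c :=
    sum_lt_sum_of_nonempty hT fun t ht => sum_lt_sum_of_nonempty hT fun t' ht' => hcon t ht t' ht'
  have e : ∑ t ∈ T, ∑ t' ∈ T, c = ∑ t ∈ T, ∑ t' ∈ T, g t t' := by
    rw [hc]; simp only [sum_const, nsmul_eq_mul]; field_simp
  linarith

lemma Pit_sum_succ {ι : Type*} (T : Finset G) (r : ℕ) (f : G → ℝ) (I : Finset ι) (g : ι → G) :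
    ∑ i ∈ I, Pit T (r + 1) f (g i) =
      (∑ t ∈ T, ∑ t' ∈ T, ∑ i ∈ I, Pit T r f (g i + t - t')) / (T.card : ℝ) ^ 2 := by
  simp only [Pit]
  rw [← sum_div]
  congr 1
  rw [sum_comm]
  exact sum_congr rfl fun t _ => sum_comm

lemma Pit_lower {T : Finset G} (hT : T.Nonempty) (f : G → ℝ) (X : Finset G) {c : ℝ}
    (h : ∀ z, ∀ t ∈ T, ∀ t' ∈ T, ∑ x ∈ X, f (x + z) - c ≤ ∑ x ∈ X, f (x + (z + t - t')))
    (r : ℕ) (z : G) : ∑ x ∈ X, f (x + z) - r * c ≤ ∑ x ∈ X, Pit T r f (x + z) := by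
  induction r generalizing z with
  | zero => simp [Pit]
  | succ r ih =>
    rw [Pit_sum_succ]
    apply avg_le hT
    intro t ht t' ht'
    have h1 := h z t ht t' ht'
    have h2 := ih (z + t - t')
    have e : ∀ x, x + z + t - t' = x + (z + t - t') := fun x => by abel
    simp_rw [e]
    push_cast
    linarith

lemma Pit_exists {ι : Type*} {T : Finset G} (hT : T.Nonempty) (f : G → ℝ) (I : Finset ι) (r : ℕ)
    (g : ι → G) : ∃ u, ∑ i ∈ I, Pit T r f (g i) ≤ ∑ i ∈ I, f (g i + u) := by
  induction r generalizing g with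
  | zero => exact ⟨0, by simp [Pit]⟩
  | succ r ih =>
    rw [Pit_sum_succ]
    obtain ⟨t, _, t', _, h⟩ := exists_ge_avg hT (fun t t' => ∑ i ∈ I, Pit T r f (g i + t - t'))
    obtain ⟨u, hu⟩ := ih (fun i => g i + t - t')
    refine ⟨t - t' + u, h.trans (hu.trans (le_of_eq ?_))⟩
    refine sum_congr rfl fun i _ => ?_
    congr 1; abel

/-- Fourier coefficient -/
noncomputable def fc (f : G → ℝ) (χ : AddChar G ℂ) : ℂ := ∑ y, (f y : ℂ) * χ y

lemma fourier_inv (f : G → ℝ) (x : G) :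
    (f x : ℂ) = (∑ χ : AddChar G ℂ, fc f χ * χ (-x)) / Fintype.card G := by
  have hN : (Fintype.card G : ℂ) ≠ 0 := by exact_mod_cast Fintype.card_ne_zero
  rw [eq_div_iff hN]
  unfold fc
  simp_rw [Finset.sum_mul]
  rw [sum_comm]
  have : ∀ y, ∑ χ : AddChar G ℂ, (f y : ℂ) * χ y * χ (-x) =
      if y = x then (f y : ℂ) * Fintype.card G else 0 := by
    intro y
    have e : ∀ χ : AddChar G ℂ, (f y : ℂ) * χ y * χ (-x) = f y * χ (y - x) := by
      intro χ; rw [sub_eq_add_neg, AddChar.map_add_eq_mul]; ring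
    simp_rw [e]
    rw [← Finset.mul_sum, AddChar.sum_apply_eq_ite]
    simp only [sub_eq_zero, mul_ite, mul_zero]
  simp_rw [this]
  simp

lemma parseval (f : G → ℝ) :
    ∑ χ : AddChar G ℂ, ‖fc f χ‖ ^ 2 = Fintype.card G * ∑ y, f y ^ 2 := by
  have h : ∀ χ : AddChar G ℂ, ((‖fc f χ‖ ^ 2 : ℝ) : ℂ) = ∑ x, (f x : ℂ) * (fc f χ * χ (-x)) := by
    intro χ
    have : ((‖fc f χ‖ ^ 2 : ℝ) : ℂ) = fc f χ * (starRingEnd ℂ) (fc f χ) := by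
      rw [Complex.mul_conj, Complex.normSq_eq_norm_sq]
    rw [this]
    nth_rewrite 2 [fc]
    rw [map_sum, Finset.mul_sum]
    refine sum_congr rfl fun x _ => ?_
    rw [map_mul, Complex.conj_ofReal, AddChar.map_neg_eq_conj]; ring
  have h2 : ((∑ χ : AddChar G ℂ, ‖fc f χ‖ ^ 2 : ℝ) : ℂ) =
      ((Fintype.card G * ∑ y, f y ^ 2 : ℝ) : ℂ) := by
    rw [Complex.ofReal_sum]
    simp_rw [h]
    rw [sum_comm]
    simp_rw [← Finset.mul_sum]
    have hN : (Fintype.card G : ℂ) ≠ 0 := by exact_mod_cast Fintype.card_ne_zero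
    have : ∀ x, ∑ χ : AddChar G ℂ, fc f χ * χ (-x) = f x * Fintype.card G := by
      intro x
      have := fourier_inv f x
      rw [eq_div_iff hN] at this
      exact this.symm
    simp_rw [this]
    push_cast
    rw [Finset.mul_sum]
    refine sum_congr rfl fun x _ => ?_
    ring
  exact_mod_cast h2

lemma fc_ind (X : Finset G) (χ : AddChar G ℂ) : fc (ind X) χ = ∑ x ∈ X, χ x := by
  have h : ∀ y, ((ind X y : ℝ) : ℂ) * χ y = if y ∈ X then χ y else 0 := by
    intro y; unfold ind; split_ifs <;> simp
  unfold fc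
  simp_rw [h]
  rw [sum_ite_mem, univ_inter]

lemma fc_ind_conj (X : Finset G) (χ : AddChar G ℂ) :
    ∑ x ∈ X, χ (-x) = (starRingEnd ℂ) (fc (ind X) χ) := by
  rw [fc_ind, map_sum]
  exact sum_congr rfl fun x _ => AddChar.map_neg_eq_conj χ x

lemma Pit_fourier {T : Finset G} (f : G → ℝ) (r : ℕ) (x : G) :
    (Pit T r f x : ℂ) = (∑ χ : AddChar G ℂ,
      fc f χ * ((‖fc (ind T) χ‖ ^ 2 / (T.card : ℝ) ^ 2 : ℝ) : ℂ) ^ r * χ (-x)) / Fintype.card G := by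
  induction r generalizing x with
  | zero => simpa [Pit] using fourier_inv f x
  | succ r ih =>
    simp only [Pit]
    push_cast
    simp_rw [ih]
    simp_rw [← Finset.sum_div]
    rw [div_right_comm]
    congr 1
    rw [div_eq_mul_inv]
    have : ∑ t ∈ T, ∑ t' ∈ T, ∑ χ : AddChar G ℂ,
        fc f χ * ((‖fc (ind T) χ‖ ^ 2 / (T.card : ℝ) ^ 2 : ℝ) : ℂ) ^ r * χ (-(x + t - t')) =
        ∑ χ : AddChar G ℂ, fc f χ * ((‖fc (ind T) χ‖ ^ 2 / (T.card : ℝ) ^ 2 : ℝ) : ℂ) ^ r * χ (-x) *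
          ((‖fc (ind T) χ‖ ^ 2 : ℝ) : ℂ) := by
      have e1 : ∀ t ∈ T, ∑ t' ∈ T, ∑ χ : AddChar G ℂ,
        fc f χ * ((‖fc (ind T) χ‖ ^ 2 / (T.card : ℝ) ^ 2 : ℝ) : ℂ) ^ r * χ (-(x + t - t')) =
        ∑ χ : AddChar G ℂ, ∑ t' ∈ T,
        fc f χ * ((‖fc (ind T) χ‖ ^ 2 / (T.card : ℝ) ^ 2 : ℝ) : ℂ) ^ r * χ (-(x + t - t')) :=
        fun t _ => sum_comm
      rw [sum_congr rfl e1, sum_comm]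
      refine sum_congr rfl fun χ _ => ?_
      have e2 : ((‖fc (ind T) χ‖ ^ 2 : ℝ) : ℂ) = ∑ t ∈ T, ∑ t' ∈ T, χ (-t) * χ t' := by
        rw [← sum_mul_sum, fc_ind_conj, ← fc_ind, mul_comm, Complex.mul_conj,
          Complex.normSq_eq_norm_sq]
      rw [e2, Finset.mul_sum]
      refine sum_congr rfl fun t _ => ?_
      rw [Finset.mul_sum]
      refine sum_congr rfl fun t' _ => ?_
      have : -(x + t - t') = -x + (-t + t') := by abel
      rw [this, AddChar.map_add_eq_mul, AddChar.map_add_eq_mul]; ring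
    rw [this, Finset.sum_mul]
    refine sum_congr rfl fun χ _ => ?_
    rw [pow_succ]
    push_cast
    ring

lemma fourier_close {T X : Finset G} (hT : T.Nonempty) (hX : X.Nonempty) (f : G → ℝ) (r : ℕ)
    {σ L : ℝ} (hσ : 2 / 4 ^ r ≤ σ) (hL : 0 ≤ L) (hf : ∑ y, f y ^ 2 ≤ L ^ 2 * X.card) {b : G}
    (hb : ∀ χ : AddChar G ℂ, (T.card : ℝ) / 2 ≤ ‖∑ t ∈ T, χ t‖ → ‖χ b - 1‖ ≤ σ) :
    |∑ x ∈ X, Pit T r f (x + b) - ∑ x ∈ X, Pit T r f (x + 0)| ≤ σ * (L * X.card) := by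
  have hn : (0 : ℝ) < T.card := by exact_mod_cast hT.card_pos
  have hN : (0 : ℝ) < Fintype.card G := by exact_mod_cast Fintype.card_pos
  have hσ0 : 0 ≤ σ := le_trans (by positivity) hσ
  have hsum : ∀ z, ((∑ x ∈ X, Pit T r f (x + z) : ℝ) : ℂ) = (∑ χ : AddChar G ℂ,
      fc f χ * ((‖fc (ind T) χ‖ ^ 2 / (T.card : ℝ) ^ 2 : ℝ) : ℂ) ^ r *
        (starRingEnd ℂ) (fc (ind X) χ) * χ (-z)) / Fintype.card G := by
    intro z
    rw [Complex.ofReal_sum]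
    simp_rw [Pit_fourier]
    rw [← Finset.sum_div, sum_comm]
    congr 1
    refine sum_congr rfl fun χ _ => ?_
    rw [← fc_ind_conj, Finset.mul_sum, Finset.sum_mul]
    refine sum_congr rfl fun x _ => ?_
    rw [neg_add, AddChar.map_add_eq_mul]; ring
  have e : ((∑ x ∈ X, Pit T r f (x + b) - ∑ x ∈ X, Pit T r f (x + 0) : ℝ) : ℂ) =
      (∑ χ : AddChar G ℂ,
      fc f χ * ((‖fc (ind T) χ‖ ^ 2 / (T.card : ℝ) ^ 2 : ℝ) : ℂ) ^ r *
        (starRingEnd ℂ) (fc (ind X) χ) * (χ (-b) - 1)) / Fintype.card G := by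
    rw [Complex.ofReal_sub, hsum, hsum, ← sub_div, ← sum_sub_distrib]
    congr 1
    refine sum_congr rfl fun χ _ => ?_
    rw [neg_zero, AddChar.map_zero_eq_one]; ring
  rw [← Real.norm_eq_abs, ← Complex.norm_real, e, norm_div, Complex.norm_natCast,
    div_le_iff₀ hN]
  have hterm : ∀ χ : AddChar G ℂ, ‖fc f χ * ((‖fc (ind T) χ‖ ^ 2 / (T.card : ℝ) ^ 2 : ℝ) : ℂ) ^ r *
        (starRingEnd ℂ) (fc (ind X) χ) * (χ (-b) - 1)‖ ≤ σ * (‖fc f χ‖ * ‖fc (ind X) χ‖) := by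
    intro χ
    rw [norm_mul, norm_mul, norm_mul, norm_pow, Complex.norm_real, RCLike.norm_conj, norm_char_neg,
      Real.norm_eq_abs, abs_of_nonneg (by positivity)]
    set w := ‖fc (ind T) χ‖ ^ 2 / (T.card : ℝ) ^ 2 with hw
    have hw0 : 0 ≤ w := by positivity
    have key : w ^ r * ‖χ b - 1‖ ≤ σ := by
      by_cases hc : (T.card : ℝ) / 2 ≤ ‖∑ t ∈ T, χ t‖
      · have h1 := hb χ hc
        have : w ≤ 1 := by
          rw [hw, fc_ind]
          refine div_le_one_of_le₀ ?_ (by positivity)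
          have : ‖∑ t ∈ T, χ t‖ ≤ T.card := by
            refine (norm_sum_le _ _).trans ?_
            simp [norm_char]
          gcongr
        have h2 := pow_le_one₀ hw0 this (n := r)
        nlinarith [norm_nonneg (χ b - 1)]
      · push Not at hc
        have h3 : w ≤ 1 / 4 := by
          rw [hw, fc_ind, div_le_iff₀ (by positivity)]
          nlinarith [norm_nonneg (∑ t ∈ T, χ t)]
        have h4 : ‖χ b - 1‖ ≤ 2 := by
          refine (norm_sub_le _ _).trans ?_
          rw [norm_char, norm_one]; norm_num
        calc w ^ r * ‖χ b - 1‖ ≤ (1 / 4) ^ r * 2 := by gcongr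
          _ = 2 / 4 ^ r := by rw [div_pow, one_pow]; ring
          _ ≤ σ := hσ
    calc ‖fc f χ‖ * w ^ r * ‖fc (ind X) χ‖ * ‖χ b - 1‖ =
        (w ^ r * ‖χ b - 1‖) * (‖fc f χ‖ * ‖fc (ind X) χ‖) := by ring
      _ ≤ _ := by gcongr
  refine (norm_sum_le _ _).trans ((sum_le_sum fun χ _ => hterm χ).trans ?_)
  rw [← Finset.mul_sum, mul_assoc]
  refine mul_le_mul_of_nonneg_left ?_ hσ0
  have cs := Finset.sum_mul_sq_le_sq_mul_sq (univ : Finset (AddChar G ℂ))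
    (fun χ => ‖fc f χ‖) (fun χ => ‖fc (ind X) χ‖)
  rw [parseval, parseval] at cs
  have e2 : ∑ y, ind X y ^ 2 = X.card := by
    rw [← sum_ind]
    refine sum_congr rfl fun y _ => ?_
    unfold ind; split_ifs <;> norm_num
  rw [e2] at cs
  refine abs_le_of_sq_le_sq' ?_ (by positivity) |>.2
  refine cs.trans ?_
  calc (Fintype.card G : ℝ) * (∑ y, f y ^ 2) * (Fintype.card G * X.card) ≤
      (Fintype.card G : ℝ) * (L ^ 2 * X.card) * (Fintype.card G * X.card) := by gcongr
    _ = _ := by ring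

end Fou

end KM


open Finset

set_option linter.unusedSectionVars false
set_option linter.unusedDecidableInType false

namespace KM

section AP

variable {G : Type*} [AddCommGroup G] [Fintype G] [DecidableEq G]

lemma sum_psi {S X : Finset G} (hX : X.Nonempty) : ∑ y, psi S X y = S.card := by
  have hn : (X.card : ℝ) ≠ 0 := by exact_mod_cast hX.card_pos.ne'
  unfold psi
  rw [← sum_div, sum_comm]
  have : ∀ x ∈ X, ∑ y, ind S (y - x) = S.card := by
    intro x _
    rw [← sum_ind, ← Equiv.sum_comp (Equiv.subRight x) (ind _)]; rfl
  rw [sum_congr rfl this, sum_const, nsmul_eq_mul]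
  field_simp

lemma ap_main {S X₁ X F Fp Bs Y : Finset G} {τ η δ ε ζ L σ : ℝ} {k r K : ℕ} (hk : 0 < k)
    (hB : Bs.Nonempty) (hX₁ : X₁.Nonempty)
    (hX : X.Nonempty) (hXF : X ⊆ F) (hτ0 : 0 < τ) (hτ : τ * F.card ≤ X.card)
    (hη : 0 < η) (hη1 : η ≤ 1)
    (hFp : ∀ x ∈ F, ∀ t ∈ Bs, x + t ∈ Fp) (hFpc : (Fp.card : ℝ) ≤ 2 * F.card)
    (hY : ∀ s ∈ S, ∀ x ∈ X, s + x ∈ Y)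
    (hYc : 8 * Y.card * Real.exp (-(k * η ^ 2 / 4)) ≤ η * X₁.card)
    (hL : 0 ≤ L) (hS : (S.card : ℝ) ≤ L ^ 2 * X₁.card)
    (hpair : (1 - δ) * X₁.card ≤ ∑ x ∈ X₁, psi S X x)
    (hK : 80 * (Real.log 2 + k * Real.log (2 / τ)) ≤ K)
    (hζ : 0 ≤ ζ) (hε : 0 ≤ ε)
    (hσ : 2 / 4 ^ r ≤ σ) (hσ2 : 4 * ((Real.exp (K * ζ) - 1) + 2 * ε * 2 ^ K) ≤ σ) :
    ∃ Δ : Finset (AddChar G ℂ), Δ.card ≤ K ∧ ∀ B₃ : Finset G, B₃ ⊆ bohr Δ ζ →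
      (∀ b ∈ B₃, ((Bs.filter fun x => x + b ∉ Bs).card : ℝ) ≤ ε * Bs.card) →
      (∀ b ∈ B₃, ((Bs.filter fun x => x - b ∉ Bs).card : ℝ) ≤ ε * Bs.card) →
      ∃ u, (1 - δ - 3 * r * η - σ * L) * (B₃.card * X₁.card) ≤
        ∑ b ∈ B₃, ∑ x ∈ X₁, psi S X (x + b + u) := by
  obtain ⟨T, hTB, hTc, hT⟩ := croot_sisask hk hB hX hXF hτ0 hτ hη hη1 hFp hFpc hY
  have hBs0 : (0 : ℝ) < Bs.card := by exact_mod_cast hB.card_pos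
  have hTpos : (0 : ℝ) < T.card := lt_of_lt_of_le (by positivity) hTc
  have hT0 : T.Nonempty := by
    rw [← card_pos]; exact_mod_cast hTpos
  have hX10 : (0 : ℝ) < X₁.card := by exact_mod_cast hX₁.card_pos
  obtain ⟨n, Δ, hΔ, hn, hch⟩ := chang hTB hT0
  have hnK : n ≤ K := by
    have h1 : Real.log (Bs.card * (τ / 2) ^ k / 2) ≤ Real.log T.card :=
      Real.log_le_log (by positivity) hTc
    have h2 : Real.log (Bs.card * (τ / 2) ^ k / 2) =
        Real.log Bs.card - k * Real.log (2 / τ) - Real.log 2 := by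
      rw [Real.log_div (by positivity) (by norm_num), Real.log_mul (by positivity) (by positivity),
        Real.log_pow, Real.log_div hτ0.ne' (by norm_num), Real.log_div (by norm_num) hτ0.ne']
      ring
    have : (n : ℝ) ≤ K := by linarith
    exact_mod_cast this
  refine ⟨Δ, hΔ.trans hnK, ?_⟩
  intro B₃ hB3 hsh1 hsh2
  set f := psi S X with hf
  -- smoothing
  have hlow : ∀ z, ∀ t ∈ T, ∀ t' ∈ T,
      ∑ x ∈ X₁, f (x + z) - 3 * η * X₁.card ≤ ∑ x ∈ X₁, f (x + (z + t - t')) := by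
    intro z t ht t' ht'
    set bad := univ.filter fun y => 2 * η < |f (y + t - t') - f y| with hbad
    have hb := (hT t ht t' ht').trans hYc
    have h1 : ∀ x ∈ X₁, f (x + z) ≤ f (x + (z + t - t')) + 2 * η + ind bad (x + z) := by
      intro x _
      have e : x + (z + t - t') = x + z + t - t' := by abel
      rw [e]
      by_cases hx : x + z ∈ bad
      · have : ind bad (x + z) = 1 := by simp [ind, hx]
        rw [this]
        have a := psi_le_one S X (x + z)
        have b := psi_nonneg S X (x + z + t - t')
        rw [← hf] at a b
        linarith
      · have : ind bad (x + z) = 0 := by simp [ind, hx]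
        rw [this]
        simp only [hbad, mem_filter, mem_univ, true_and, not_lt] at hx
        rw [abs_le] at hx
        linarith [hx.1]
    have h2 := sum_le_sum h1
    rw [sum_add_distrib, sum_add_distrib, sum_const, nsmul_eq_mul] at h2
    have h3 : ∑ x ∈ X₁, ind bad (x + z) ≤ bad.card := by
      rw [← sum_ind bad, ← Equiv.sum_comp (Equiv.addRight z) (ind bad)]
      exact sum_le_sum_of_subset_of_nonneg (subset_univ _) fun x _ _ => ind_nonneg _ _
    linarith
  have hP0 := Pit_lower hT0 f X₁ hlow r 0
  simp only [add_zero] at hP0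
  have hsq : ∑ y, f y ^ 2 ≤ L ^ 2 * X₁.card := by
    refine le_trans ?_ hS
    rw [← sum_psi (S := S) hX]
    refine sum_le_sum fun y _ => ?_
    have a := psi_le_one S X y
    have b := psi_nonneg S X y
    rw [← hf] at a b ⊢
    nlinarith
  have hPb : ∀ b ∈ B₃, (1 - δ - 3 * r * η - σ * L) * X₁.card ≤ ∑ x ∈ X₁, Pit T r f (x + b) := by
    intro b hb
    have := fourier_close hT0 hX₁ f r hσ hL hsq (b := b) (fun χ hχ => by
      refine (hch ζ ε hζ hε b (hB3 hb) (hsh1 b hb) (hsh2 b hb) χ hχ).trans (le_trans ?_ hσ2)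
      have : (n : ℝ) ≤ K := by exact_mod_cast hnK
      have h2 : (2 : ℝ) ^ n ≤ 2 ^ K := pow_le_pow_right₀ (by norm_num) hnK
      gcongr)
    rw [abs_le] at this
    have h1 := this.1
    simp only [add_zero] at h1
    linarith
  obtain ⟨u, hu⟩ := Pit_exists hT0 f (B₃ ×ˢ X₁) r (fun i => i.2 + i.1)
  rw [sum_product, sum_product] at hu
  refine ⟨u, le_trans ?_ hu⟩
  calc _ = ∑ b ∈ B₃, (1 - δ - 3 * r * η - σ * L) * X₁.card := by simp; ring
    _ ≤ _ := sum_le_sum hPb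

end AP

end KM


open Finset

set_option linter.unusedSectionVars false
set_option linter.unusedDecidableInType false

namespace KM

section Core

variable {G : Type*} [AddCommGroup G] [Fintype G] [DecidableEq G]

/-- number of representations -/
def mrep (E F : Finset G) (v : G) : ℝ := ∑ e ∈ E, ∑ f ∈ F, if e + f = v then 1 else 0

lemma mrep_nonneg (E F : Finset G) (v : G) : 0 ≤ mrep E F v :=
  sum_nonneg fun _ _ => sum_nonneg fun _ _ => by split_ifs <;> norm_num

lemma mrep_neg {E F : Finset G} (hE : ∀ x, -x ∈ E ↔ x ∈ E) (hF : ∀ x, -x ∈ F ↔ x ∈ F) (v : G) :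
    mrep E F (-v) = mrep E F v := by
  unfold mrep
  have h : ∀ (X : Finset G), (∀ x, -x ∈ X ↔ x ∈ X) → ∀ g : G → ℝ,
      ∑ x ∈ X, g x = ∑ x ∈ X, g (-x) := by
    intro X hX g
    refine sum_nbij' (fun x => -x) (fun x => -x) ?_ ?_ ?_ ?_ ?_ <;> simp [hX]
  rw [h E hE]
  refine sum_congr rfl fun e _ => ?_
  rw [h F hF]
  refine sum_congr rfl fun f _ => ?_
  have : -e + -f = -v ↔ e + f = v := by rw [← neg_add, neg_inj]
  simp [this]

lemma mrep_ne {E F : Finset G} {v : G} (h : mrep E F v ≠ 0) : ∃ e ∈ E, ∃ f ∈ F, e + f = v := by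
  by_contra! hcon
  apply h
  unfold mrep
  exact sum_eq_zero fun e he => sum_eq_zero fun f hf => if_neg (hcon e he f hf)

lemma sum_mrep (E F : Finset G) (g : G → ℝ) :
    ∑ v, mrep E F v * g v = ∑ e ∈ E, ∑ f ∈ F, g (e + f) := by
  unfold mrep
  simp_rw [Finset.sum_mul]
  rw [sum_comm]
  refine sum_congr rfl fun e _ => ?_
  rw [sum_comm]
  refine sum_congr rfl fun f _ => ?_
  simp

lemma sum_mrep_two (E F : Finset G) (g : G → ℝ) :
    ∑ v, ∑ v', mrep E F v * mrep E F v' * g (v - v') =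
      ∑ u ∈ F, ∑ u' ∈ E, ∑ e ∈ E, ∑ f ∈ F, g ((e + u) - (u' + f)) := by
  have h1 : ∀ v, ∑ v', mrep E F v * mrep E F v' * g (v - v') =
      mrep E F v * ∑ u' ∈ E, ∑ f ∈ F, g (v - (u' + f)) := by
    intro v
    rw [← sum_mrep E F (fun v' => g (v - v')), Finset.mul_sum]
    exact sum_congr rfl fun _ _ => by ring
  simp_rw [h1]
  rw [sum_mrep E F (fun v => ∑ u' ∈ E, ∑ f ∈ F, g (v - (u' + f))), sum_comm]
  refine sum_congr rfl fun u _ => sum_comm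

lemma theta_remove {E F : Finset G} (hE : E.Nonempty) (hF : F.Nonempty) (H : G → ℝ)
    (hH : ∀ x, 0 ≤ H x) {p : ℕ} (hp : 17 ≤ p)
    (h : (7 / 4 : ℝ) ^ p * (∑ v, mrep E F v) ^ 2 ≤
      ∑ v, ∑ v', mrep E F v * mrep E F v' * (H (v - v') + 1 / 200) ^ (8 * p)) :
    (3 / 2 : ℝ) ^ p * (E.card : ℝ) ^ 2 * (F.card : ℝ) ^ 2 ≤
      ∑ u ∈ F, ∑ u' ∈ E, ∑ e ∈ E, ∑ f ∈ F, H ((e + u) - (u' + f)) ^ (8 * p) := by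
  have hM : ∑ v, mrep E F v = E.card * F.card := by
    have := sum_mrep E F (fun _ => 1)
    simpa using this
  rw [hM] at h
  rw [sum_mrep_two E F (fun w => (H w + 1 / 200) ^ (8 * p))] at h
  set Q := ∑ u ∈ F, ∑ u' ∈ E, ∑ e ∈ E, ∑ f ∈ F, H ((e + u) - (u' + f)) ^ (8 * p) with hQ
  have hpt : ∀ w, (H w + 1 / 200) ^ (8 * p) ≤ (11 / 10) ^ p * H w ^ (8 * p) + 1 := by
    intro w
    have hw := hH w
    by_cases hc : 1 / 2 ≤ H w
    · have : (H w + 1 / 200) ^ (8 * p) ≤ (11 / 10) ^ p * H w ^ (8 * p) := by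
        calc (H w + 1 / 200) ^ (8 * p) ≤ (101 / 100 * H w) ^ (8 * p) := by
              gcongr; linarith
          _ = ((101 / 100 : ℝ) ^ 8) ^ p * H w ^ (8 * p) := by rw [mul_pow, pow_mul]
          _ ≤ _ := by gcongr; norm_num
      linarith
    · push Not at hc
      have h1 : (H w + 1 / 200) ^ (8 * p) ≤ 1 := pow_le_one₀ (by linarith) (by linarith)
      have h2 : (0 : ℝ) ≤ (11 / 10) ^ p * H w ^ (8 * p) := by positivity
      linarith
  have h2 : (7 / 4 : ℝ) ^ p * (E.card * F.card) ^ 2 ≤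
      (11 / 10) ^ p * Q + (E.card * F.card) ^ 2 := by
    refine h.trans ?_
    calc _ ≤ ∑ u ∈ F, ∑ u' ∈ E, ∑ e ∈ E, ∑ f ∈ F,
          ((11 / 10) ^ p * H ((e + u) - (u' + f)) ^ (8 * p) + 1) :=
        sum_le_sum fun _ _ => sum_le_sum fun _ _ => sum_le_sum fun _ _ => sum_le_sum fun _ _ =>
          hpt _
      _ = _ := by
        simp_rw [sum_add_distrib, ← Finset.mul_sum]
        rw [hQ]; simp; ring
  have h3 : (33 / 20 : ℝ) ^ p + 1 ≤ (7 / 4) ^ p := by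
    have e : (7 / 4 : ℝ) ^ p = (33 / 20) ^ p * (35 / 33) ^ p := by rw [← mul_pow]; norm_num
    have b := one_add_mul_le_pow (a := (2 / 33 : ℝ)) (by norm_num) p
    have e2 : (1 + 2 / 33 : ℝ) = 35 / 33 := by norm_num
    rw [e2] at b
    have hp' : (17 : ℝ) ≤ p := by exact_mod_cast hp
    have c : (1 : ℝ) ≤ (33 / 20) ^ p := one_le_pow₀ (by norm_num)
    rw [e]
    nlinarith
  have h4 : (33 / 20 : ℝ) ^ p * (E.card * F.card) ^ 2 ≤ (11 / 10) ^ p * Q := by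
    nlinarith [sq_nonneg ((E.card : ℝ) * F.card)]
  have h5 : (33 / 20 : ℝ) ^ p = (11 / 10) ^ p * (3 / 2) ^ p := by rw [← mul_pow]; norm_num
  rw [h5, mul_assoc] at h4
  have h6 := le_of_mul_le_mul_left h4 (by positivity)
  calc _ = (3 / 2 : ℝ) ^ p * (E.card * F.card) ^ 2 := by ring
    _ ≤ Q := h6

lemma dc_ind_eq (A : Finset G) (w : G) :
    dc (ind A) w = ∑ x ∈ A, ind A (x + w) := by
  unfold dc
  simp_rw [mul_comm (ind A (_ + w))]
  rw [sum_ind_mul]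

set_option maxHeartbeats 1000000 in
lemma core {A B E F Ep Fp Bs Y : Finset G} {α τ η ε ζ L σ : ℝ} {p k r K : ℕ}
    (hα : 0 < α) (hA : (A.card : ℝ) = α * B.card) (hB0 : B.Nonempty)
    (hE : E.Nonempty) (hF : F.Nonempty) (hBs : Bs.Nonempty)
    (hτ0 : 0 < τ) (hτ : τ ≤ α ^ (8 * p) / 4)
    (hT : (3 / 2 : ℝ) ^ p * (E.card : ℝ) ^ 2 * (F.card : ℝ) ^ 2 ≤
      ∑ u ∈ F, ∑ u' ∈ E, ∑ e ∈ E, ∑ f ∈ F,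
        (dc (ind A) ((e + u) - (u' + f)) / (α ^ 2 * B.card)) ^ (8 * p))
    (hEp : ∀ e ∈ E, ∀ f ∈ F, e - f ∈ Ep) (hEpc : (Ep.card : ℝ) ≤ 2 * E.card)
    (hFp : ∀ x ∈ F, ∀ t ∈ Bs, x + t ∈ Fp) (hFpc : (Fp.card : ℝ) ≤ 2 * F.card)
    (hY : ∀ s ∈ Ep, ∀ x ∈ F, s + x ∈ Y) (hYc : (Y.card : ℝ) ≤ 2 * E.card)
    (hk : 0 < k) (hη : 0 < η) (hη1 : η ≤ 1)
    (hkη : 16 * Real.exp (-(k * η ^ 2 / 4)) ≤ η * τ)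
    (hL : 0 ≤ L) (hLτ : 2 ≤ L ^ 2 * τ)
    (hK : 80 * (Real.log 2 + k * Real.log (2 / τ)) ≤ K)
    (hζ : 0 ≤ ζ) (hε : 0 ≤ ε)
    (hσ : 2 / 4 ^ r ≤ σ) (hσ2 : 4 * ((Real.exp (K * ζ) - 1) + 2 * ε * 2 ^ K) ≤ σ)
    (herr : 2 * (4 / 5) ^ p + 3 * r * η + σ * L ≤ 1 / 250) :
    ∃ Δ : Finset (AddChar G ℂ), Δ.card ≤ K ∧ ∀ B₃ : Finset G, B₃.Nonempty → B₃ ⊆ bohr Δ ζ →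
      (∀ b ∈ B₃, ((Bs.filter fun x => x + b ∉ Bs).card : ℝ) ≤ ε * Bs.card) →
      (∀ b ∈ B₃, ((Bs.filter fun x => x - b ∉ Bs).card : ℝ) ≤ ε * Bs.card) →
      ∃ x, 203 / 200 * α * B₃.card ≤ (B₃.filter fun b => x + b ∈ A).card := by
  classical
  have hBp : (0 : ℝ) < B.card := by exact_mod_cast hB0.card_pos
  have hE0 : (0 : ℝ) < E.card := by exact_mod_cast hE.card_pos
  have hF0 : (0 : ℝ) < F.card := by exact_mod_cast hF.card_pos
  set Q : ℝ := α ^ 2 * B.card with hQ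
  have hQ0 : 0 < Q := by positivity
  have hT' : (3 / 2 : ℝ) ^ p * Q ^ (8 * p) * (E.card : ℝ) ^ 2 * (F.card : ℝ) ^ 2 ≤
      ∑ u ∈ F, ∑ u' ∈ E, ∑ e ∈ E, ∑ f ∈ F, dc (ind A) ((e + u) - (u' + f)) ^ (8 * p) := by
    have e : ∑ u ∈ F, ∑ u' ∈ E, ∑ e ∈ E, ∑ f ∈ F,
        (dc (ind A) ((e + u) - (u' + f)) / Q) ^ (8 * p) =
        (∑ u ∈ F, ∑ u' ∈ E, ∑ e ∈ E, ∑ f ∈ F,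
          dc (ind A) ((e + u) - (u' + f)) ^ (8 * p)) / Q ^ (8 * p) := by
      simp_rw [div_pow, ← Finset.sum_div]
    rw [e, le_div_iff₀ (by positivity)] at hT
    linarith
  have hτA : τ * (A.card : ℝ) ^ (8 * p) ≤ Q ^ (8 * p) / 4 := by
    calc τ * (A.card : ℝ) ^ (8 * p) ≤ α ^ (8 * p) / 4 * (A.card : ℝ) ^ (8 * p) := by gcongr
      _ = Q ^ (8 * p) / 4 := by
        have : Q = α * (α * B.card) := by rw [hQ]; ring
        rw [hA, this, mul_pow α (α * (B.card : ℝ))]; ring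
  obtain ⟨X₁, hX1, X, hX, k₀, hX1c, hXc, hbad⟩ := sift (q := 8 * p) (K := Q) (τ := τ)
    (M := (3 / 2) ^ p) (l := 51 / 50) (δ := 2 * (4 / 5) ^ p) hE hF hQ0 hτ0.le hτA
    (one_le_pow₀ (by norm_num)) (by norm_num) (by positivity) (by
      rw [pow_mul, mul_div_cancel_left₀ _ (by norm_num : (2 : ℝ) ≠ 0), ← mul_pow]
      gcongr
      norm_num) hT'
  have hX10 : (0 : ℝ) < X₁.card := lt_of_le_of_lt (by positivity) hX1c
  have hX0 : (0 : ℝ) < X.card := lt_of_le_of_lt (by positivity) hXc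
  have hX1n : X₁.Nonempty := by rw [← card_pos]; exact_mod_cast hX10
  have hXn : X.Nonempty := by rw [← card_pos]; exact_mod_cast hX0
  set S := Ep.filter fun w => 51 / 50 * Q < dc (ind A) (w + k₀) with hS
  have hpair : (1 - 2 * (4 / 5) ^ p) * X₁.card ≤ ∑ x ∈ X₁, psi S X x := by
    unfold psi
    rw [← sum_div, le_div_iff₀ hX0]
    have e : ((X₁.card : ℝ) * X.card) = ∑ x ∈ X₁, ∑ y ∈ X, (1 : ℝ) := by simp
    have : (X₁.card : ℝ) * X.card ≤ ∑ x ∈ X₁, ∑ y ∈ X, ind S (x - y) +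
        (((X₁ ×ˢ X).filter fun z => dc (ind A) (z.1 - z.2 + k₀) ≤ 51 / 50 * Q).card : ℝ) := by
      rw [e, card_filter, sum_product]
      push_cast
      rw [← sum_add_distrib]
      refine sum_le_sum fun x hx => ?_
      rw [← sum_add_distrib]
      refine sum_le_sum fun y hy => ?_
      by_cases hc : dc (ind A) (x - y + k₀) ≤ 51 / 50 * Q
      · simp [hc, ind_nonneg]
      · have : x - y ∈ S := mem_filter.2 ⟨hEp x (hX1 hx) y (hX hy), not_le.1 hc⟩
        simp [hc, ind, this]
    linarith
  obtain ⟨Δ, hΔ, hmain⟩ := ap_main (S := S) (X₁ := X₁) (X := X) (F := F) (Fp := Fp) (Bs := Bs)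
    (Y := Y) (τ := τ) (η := η) (δ := 2 * (4 / 5) ^ p) (ε := ε) (ζ := ζ) (L := L) (σ := σ) (r := r)
    (K := K) hk hBs hX1n hXn hX hτ0 hXc.le hη hη1 hFp hFpc
    (fun s hs x hx => hY s (mem_filter.1 hs).1 x (hX hx))
    (by
      calc 8 * Y.card * Real.exp (-(k * η ^ 2 / 4)) ≤
          8 * (2 * E.card) * Real.exp (-(k * η ^ 2 / 4)) := by gcongr
        _ = E.card * (16 * Real.exp (-(k * η ^ 2 / 4))) := by ring
        _ ≤ E.card * (η * τ) := by gcongr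
        _ = η * (τ * E.card) := by ring
        _ ≤ _ := by gcongr)
    hL
    (by
      calc (S.card : ℝ) ≤ Ep.card := by exact_mod_cast card_le_card (filter_subset _ _)
        _ ≤ 2 * E.card := hEpc
        _ ≤ L ^ 2 * τ * E.card := by gcongr
        _ = L ^ 2 * (τ * E.card) := by ring
        _ ≤ _ := by gcongr)
    hpair hK hζ hε hσ hσ2
  refine ⟨Δ, hΔ, ?_⟩
  intro B₃ hB3n hB3 hs1 hs2
  obtain ⟨u, hu⟩ := hmain B₃ hB3 hs1 hs2
  have hB30 : (0 : ℝ) < B₃.card := by exact_mod_cast hB3n.card_pos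
  -- pass to `dc`
  have hu2 : 249 / 250 * ((B₃.card : ℝ) * X₁.card * X.card) ≤
      ∑ x ∈ X₁, ∑ y ∈ X, ∑ b ∈ B₃, ind S (x + b + u - y) := by
    have e : ∑ b ∈ B₃, ∑ x ∈ X₁, psi S X (x + b + u) =
        (∑ x ∈ X₁, ∑ y ∈ X, ∑ b ∈ B₃, ind S (x + b + u - y)) / X.card := by
      unfold psi
      simp_rw [← sum_div]
      congr 1
      rw [sum_comm]
      exact sum_congr rfl fun x _ => sum_comm
    rw [e, le_div_iff₀ hX0] at hu
    have : (249 / 250 : ℝ) ≤ 1 - 2 * (4 / 5) ^ p - 3 * r * η - σ * L := by linarith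
    calc 249 / 250 * ((B₃.card : ℝ) * X₁.card * X.card) =
        249 / 250 * ((B₃.card : ℝ) * X₁.card) * X.card := by ring
      _ ≤ (1 - 2 * (4 / 5) ^ p - 3 * r * η - σ * L) * ((B₃.card : ℝ) * X₁.card) * X.card := by
        gcongr
      _ ≤ _ := hu
  have hex : ∃ x ∈ X₁, ∃ y ∈ X, 249 / 250 * (B₃.card : ℝ) ≤ ∑ b ∈ B₃, ind S (x + b + u - y) := by
    by_contra! hcon
    have h : ∑ x ∈ X₁, ∑ y ∈ X, ∑ b ∈ B₃, ind S (x + b + u - y) <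
        ∑ x ∈ X₁, ∑ y ∈ X, 249 / 250 * (B₃.card : ℝ) :=
      sum_lt_sum_of_nonempty hX1n fun x hx => sum_lt_sum_of_nonempty hXn fun y hy => hcon x hx y hy
    have e : ∑ x ∈ X₁, ∑ y ∈ X, 249 / 250 * (B₃.card : ℝ) =
        249 / 250 * ((B₃.card : ℝ) * X₁.card * X.card) := by simp; ring
    linarith
  obtain ⟨x, -, y, -, hxy⟩ := hex
  set v := x + u - y + k₀ with hv
  have hD : 203 / 200 * Q * B₃.card ≤ ∑ b ∈ B₃, dc (ind A) (b + v) := by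
    have h1 : ∀ b ∈ B₃, 51 / 50 * Q * ind S (x + b + u - y) ≤ dc (ind A) (b + v) := by
      intro b _
      have hd : 0 ≤ dc (ind A) (b + v) :=
        sum_nonneg fun x _ => mul_nonneg (ind_nonneg _ _) (ind_nonneg _ _)
      unfold ind at *
      split_ifs with hc
      · have := (mem_filter.1 hc).2
        have e : x + b + u - y + k₀ = b + v := by rw [hv]; abel
        rw [e] at this
        rw [mul_one]
        exact this.le
      · rw [mul_zero]; exact hd
    have h2 := sum_le_sum h1
    rw [← Finset.mul_sum] at h2
    have h3 := mul_le_mul_of_nonneg_left hxy (by positivity : (0 : ℝ) ≤ 51 / 50 * Q)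
    have h4 : 0 ≤ Q * B₃.card := by positivity
    linarith
  have hsw : ∑ b ∈ B₃, dc (ind A) (b + v) = ∑ z ∈ A, ∑ b ∈ B₃, ind A (z + (b + v)) := by
    simp_rw [dc_ind_eq]
    exact sum_comm
  rw [hsw] at hD
  have hAn : A.Nonempty := by
    rw [← card_pos]
    have : (0 : ℝ) < A.card := by rw [hA]; positivity
    exact_mod_cast this
  have hfin : ∃ z ∈ A, 203 / 200 * α * B₃.card ≤ ∑ b ∈ B₃, ind A (z + (b + v)) := by
    refine exists_le_of_sum_le hAn ?_
    refine le_trans (le_of_eq ?_) hD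
    rw [sum_const, nsmul_eq_mul, hA, hQ]; ring
  obtain ⟨z, -, hz⟩ := hfin
  refine ⟨z + v, hz.trans (le_of_eq ?_)⟩
  rw [card_filter]
  push_cast
  refine sum_congr rfl fun b _ => ?_
  have : z + (b + v) = z + v + b := by abel
  rw [this]
  rfl

end Core

end KM


open Finset

set_option linter.unusedSectionVars false
set_option linter.unusedDecidableInType false

namespace KM

section Step

variable {G : Type*} [AddCommGroup G] [Fintype G] [DecidableEq G]

lemma avg_one {κ ε a ρ : ℝ} (hκ : 0 ≤ κ) {Γ : Finset (AddChar G ℂ)} (h : Reg κ ε Γ ρ)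
    {A B' : Finset G} {x0 : G} (hB' : B' ⊆ bohr Γ (κ * ρ))
    (hx : a * (bohr Γ ρ).card ≤ ((bohr Γ ρ).filter fun b => x0 + b ∈ A).card) :
    (a - ε) * (bohr Γ ρ).card * B'.card ≤
      ∑ b0 ∈ bohr Γ ρ, ((B'.filter fun b => x0 + b0 + b ∈ A).card : ℝ) := by
  classical
  have h1 : ∑ b0 ∈ bohr Γ ρ, ((B'.filter fun b => x0 + b0 + b ∈ A).card : ℝ) =
      ∑ b ∈ B', (((bohr Γ ρ).filter fun b0 => x0 + b0 + b ∈ A).card : ℝ) := by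
    simp_rw [card_filter]
    push_cast
    exact sum_comm
  rw [h1]
  have h2 : ∀ b ∈ B', (a - ε) * (bohr Γ ρ).card ≤
      (((bohr Γ ρ).filter fun b0 => x0 + b0 + b ∈ A).card : ℝ) := by
    intro b hb
    have hs := reg_shift hκ h (t := -b) (neg_mem_bohr.2 (hB' hb))
    have hsub : (((bohr Γ ρ).filter fun y => x0 + y ∈ A).filter
        fun y => y + -b ∈ bohr Γ ρ).image (fun y => y + -b) ⊆
        (bohr Γ ρ).filter fun b0 => x0 + b0 + b ∈ A := by
      intro z hz
      obtain ⟨y, hy, rfl⟩ := mem_image.1 hz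
      rw [mem_filter, mem_filter] at hy
      refine mem_filter.2 ⟨hy.2, ?_⟩
      have : x0 + (y + -b) + b = x0 + y := by abel
      rw [this]; exact hy.1.2
    have hc := card_le_card hsub
    rw [card_image_of_injective _ (add_left_injective (-b))] at hc
    have hsplit := card_filter_add_card_filter_not (s := (bohr Γ ρ).filter fun y => x0 + y ∈ A)
      (fun y => y + -b ∈ bohr Γ ρ)
    have hle : (((bohr Γ ρ).filter fun y => x0 + y ∈ A).filter fun y => y + -b ∉ bohr Γ ρ).card ≤
        ((bohr Γ ρ).filter fun y => y + -b ∉ bohr Γ ρ).card :=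
      card_le_card (filter_subset_filter _ (filter_subset _ _))
    have hr : (((bohr Γ ρ).filter fun y => x0 + y ∈ A).card : ℝ) ≤
        (((bohr Γ ρ).filter fun b0 => x0 + b0 + b ∈ A).card : ℝ) +
        (((bohr Γ ρ).filter fun y => y + -b ∉ bohr Γ ρ).card : ℝ) := by
      exact_mod_cast (by omega)
    linarith
  have := sum_le_sum h2
  rw [sum_const, nsmul_eq_mul] at this
  linarith

lemma avg_two {κ ε a ρ : ℝ} (hκ : 0 ≤ κ) {Γ : Finset (AddChar G ℂ)} (h : Reg κ ε Γ ρ)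
    {A B₁ B₂ : Finset G} {x0 : G} (hB₁ : B₁ ⊆ bohr Γ (κ * ρ)) (hB₂ : B₂ ⊆ bohr Γ (κ * ρ))
    (hn₁ : B₁.Nonempty) (hn₂ : B₂.Nonempty)
    (hx : a * (bohr Γ ρ).card ≤ ((bohr Γ ρ).filter fun b => x0 + b ∈ A).card) :
    ∃ x, 2 * (a - ε) ≤ ((B₁.filter fun b => x + b ∈ A).card : ℝ) / B₁.card +
      ((B₂.filter fun b => x + b ∈ A).card : ℝ) / B₂.card := by
  have c1 : (0 : ℝ) < B₁.card := by exact_mod_cast hn₁.card_pos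
  have c2 : (0 : ℝ) < B₂.card := by exact_mod_cast hn₂.card_pos
  have h1 := avg_one hκ h hB₁ hx
  have h2 := avg_one hκ h hB₂ hx
  rw [← le_div_iff₀ c1, sum_div] at h1
  rw [← le_div_iff₀ c2, sum_div] at h2
  have h3 := add_le_add h1 h2
  rw [← sum_add_distrib] at h3
  have hne : (bohr Γ ρ).Nonempty := ⟨0, zero_mem_bohr h.1.le⟩
  obtain ⟨b, -, hb⟩ := exists_le_of_sum_le (s := bohr Γ ρ) (f := fun _ => 2 * (a - ε)) hne
    (le_trans (le_of_eq (by rw [sum_const, nsmul_eq_mul]; ring)) h3)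
  exact ⟨x0 + b, hb⟩

/-- numerical conditions on the parameters -/
structure Par (α ε κ ζ τ η L σ : ℝ) (p k r K D J : ℕ) : Prop where
  α0 : 0 < α
  κ0 : 0 < κ
  κ1 : κ ≤ 1 / 4
  ε0 : 0 ≤ ε
  ε1 : ε ≤ α / 1000
  ε2 : ε ≤ 1
  J1 : κ * J ≤ 1 / 2
  J2 : (81 : ℝ) ^ D < (1 + ε) ^ J
  pe : Even p
  p17 : 17 ≤ p
  p2 : 4 ≤ α * 2 ^ p
  τ0 : 0 < τ
  τ1 : τ ≤ (α / 2) ^ (8 * p) / 4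
  k0 : 0 < k
  η0 : 0 < η
  η1 : η ≤ 1
  kη : 16 * Real.exp (-(k * η ^ 2 / 4)) ≤ η * τ
  L0 : 0 ≤ L
  Lτ : 2 ≤ L ^ 2 * τ
  K0 : 80 * (Real.log 2 + k * Real.log (2 / τ)) ≤ K
  ζ0 : 0 < ζ
  ζ1 : ζ ≤ 1
  σ1 : 2 / 4 ^ r ≤ σ
  σ2 : 4 * ((Real.exp (K * ζ) - 1) + 2 * ε * 2 ^ K) ≤ σ
  err : 2 * (4 / 5) ^ p + 3 * r * η + σ * L ≤ 1 / 250

lemma reg_half {κ ε ρ : ℝ} {Γ Γh : Finset (AddChar G ℂ)}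
    (hc : ∀ ρ, (bohr Γh ρ).card = (bohr Γ ρ).card) (h : Reg κ ε Γ ρ) : Reg κ ε Γh ρ := by
  refine ⟨h.1, ?_⟩
  rw [hc, hc]; exact h.2

set_option maxHeartbeats 2000000 in
lemma step {α ε κ ζ τ η L σ : ℝ} {p k r K D J : ℕ} (P : Par α ε κ ζ τ η L σ p k r K D J)
    (hG : Function.Injective fun x : G => x + x) {A : Finset G}
    (hA : ∀ x ∈ A, ∀ y ∈ A, ∀ z ∈ A, x + y = z + z → x = y)
    {Γ : Finset (AddChar G ℂ)} {ρ a : ℝ} {x0 : G} (hD : Γ.card + K ≤ D)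
    (hreg : Reg κ ε Γ ρ) (hρ : ρ ≤ 1) (ha : α ≤ a)
    (hx0 : a * (bohr Γ ρ).card ≤ ((bohr Γ ρ).filter fun b => x0 + b ∈ A).card)
    (hsize : 5 ≤ α ^ 2 * (bohr Γ (κ * ρ / 2)).card) :
    ∃ (Γ' : Finset (AddChar G ℂ)) (ρ' : ℝ) (x' : G), Γ'.card ≤ Γ.card + K ∧
      κ ^ 6 * ζ / 8192 * ρ ≤ ρ' ∧ ρ' ≤ ρ ∧ Reg κ ε Γ' ρ' ∧
      (251 / 250 * a) * (bohr Γ' ρ').card ≤ ((bohr Γ' ρ').filter fun b => x' + b ∈ A).card := by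
  classical
  have hκ := P.κ0
  have hκ1 := P.κ1
  have hζ := P.ζ0
  have hρ0 := hreg.1
  have hΓD : Γ.card ≤ D := by omega
  have ha0 : 0 < a := P.α0.trans_le ha
  obtain ⟨R1, l1, u1, g1⟩ := exists_reg hκ.le P.ε0 P.J1 P.J2 Γ hΓD (ρ := κ * ρ) (by positivity)
  have p1 := g1.1
  obtain ⟨R2, l2, u2, g2⟩ := exists_reg hκ.le P.ε0 P.J1 P.J2 Γ hΓD (ρ := κ * R1 / 2) (by positivity)
  have p2 := g2.1
  obtain ⟨R3, l3, u3, g3⟩ := exists_reg hκ.le P.ε0 P.J1 P.J2 Γ hΓD (ρ := κ * R2 / 4) (by positivity)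
  have p3 := g3.1
  obtain ⟨R4, l4, u4, g4⟩ := exists_reg hκ.le P.ε0 P.J1 P.J2 Γ hΓD (ρ := κ * R3 / 4) (by positivity)
  have p4 := g4.1
  obtain ⟨R5, l5, u5, g5⟩ := exists_reg hκ.le P.ε0 P.J1 P.J2 Γ hΓD (ρ := κ * R4 / 2) (by positivity)
  have p5 := g5.1
  have m1 : κ * R1 ≤ 1 / 4 * R1 := by gcongr
  have m2 : κ * R2 ≤ 1 / 4 * R2 := by gcongr
  have m3 : κ * R3 ≤ 1 / 4 * R3 := by gcongr
  have m4 : κ * R4 ≤ 1 / 4 * R4 := by gcongr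
  have m5 : κ * R5 ≤ 1 / 4 * R5 := by gcongr
  have m0 : κ * ρ ≤ 1 / 4 * ρ := by gcongr
  -- lower bounds
  have q1 : κ * ρ / 2 ≤ R1 := l1
  have q2 : κ ^ 2 * ρ / 8 ≤ R2 := by
    calc κ ^ 2 * ρ / 8 = κ * (κ * ρ / 2) / 2 / 2 := by ring
      _ ≤ κ * R1 / 2 / 2 := by gcongr
      _ ≤ R2 := l2
  have q3 : κ ^ 3 * ρ / 64 ≤ R3 := by
    calc κ ^ 3 * ρ / 64 = κ * (κ ^ 2 * ρ / 8) / 4 / 2 := by ring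
      _ ≤ κ * R2 / 4 / 2 := by gcongr
      _ ≤ R3 := l3
  have q4 : κ ^ 4 * ρ / 512 ≤ R4 := by
    calc κ ^ 4 * ρ / 512 = κ * (κ ^ 3 * ρ / 64) / 4 / 2 := by ring
      _ ≤ κ * R3 / 4 / 2 := by gcongr
      _ ≤ R4 := l4
  have q5 : κ ^ 5 * ρ / 2048 ≤ R5 := by
    calc κ ^ 5 * ρ / 2048 = κ * (κ ^ 4 * ρ / 512) / 2 / 2 := by ring
      _ ≤ κ * R4 / 2 / 2 := by gcongr
      _ ≤ R5 := l5
  have hk1 : κ ≤ 1 := by linarith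
  have w1 : κ ^ 6 * ζ / 8192 * ρ ≤ R1 := by
    refine le_trans ?_ q1
    have : κ ^ 6 * ζ ≤ κ := by
      calc κ ^ 6 * ζ ≤ κ ^ 6 * 1 := by gcongr; exact P.ζ1
        _ ≤ κ ^ 1 := by rw [mul_one]; exact pow_le_pow_of_le_one hκ.le hk1 (by norm_num)
        _ = κ := pow_one _
    nlinarith
  have w2 : κ ^ 6 * ζ / 8192 * ρ ≤ R2 := by
    refine le_trans ?_ q2
    have : κ ^ 6 * ζ ≤ κ ^ 2 := by
      calc κ ^ 6 * ζ ≤ κ ^ 6 * 1 := by gcongr; exact P.ζ1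
        _ ≤ κ ^ 2 := by rw [mul_one]; exact pow_le_pow_of_le_one hκ.le hk1 (by norm_num)
    have h0 : 0 ≤ κ ^ 2 := by positivity
    nlinarith
  have hn1 : (bohr Γ R1).Nonempty := ⟨0, zero_mem_bohr p1.le⟩
  have hn2 : (bohr Γ R2).Nonempty := ⟨0, zero_mem_bohr p2.le⟩
  obtain ⟨x, hx⟩ := avg_two hκ.le hreg (A := A) (bohr_mono u1)
    (bohr_mono (by linarith : R2 ≤ κ * ρ)) hn1 hn2 hx0
  have c1 : (0 : ℝ) < (bohr Γ R1).card := by exact_mod_cast hn1.card_pos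
  have c2 : (0 : ℝ) < (bohr Γ R2).card := by exact_mod_cast hn2.card_pos
  set d1 := (((bohr Γ R1).filter fun b => x + b ∈ A).card : ℝ) / (bohr Γ R1).card with hd1
  set d2 := (((bohr Γ R2).filter fun b => x + b ∈ A).card : ℝ) / (bohr Γ R2).card with hd2
  have hεa : ε ≤ a / 1000 := P.ε1.trans (by linarith)
  by_cases hb1 : 251 / 250 * a ≤ d1
  · exact ⟨Γ, R1, x, by omega, w1, by linarith, g1, (le_div_iff₀ c1).1 hb1⟩
  by_cases hb2 : 251 / 250 * a ≤ d2
  · exact ⟨Γ, R2, x, by omega, w2, by linarith, g2, (le_div_iff₀ c2).1 hb2⟩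
  push Not at hb1 hb2
  have hd1l : 124 / 125 * a ≤ d1 := by linarith
  have hd2l : 124 / 125 * a ≤ d2 := by linarith
  clear_value d1 d2
  obtain ⟨Γh, hΓh, hdbl⟩ := exists_half hG Γ
  have hcard : ∀ ρ, (bohr Γh ρ).card = (bohr Γ ρ).card := fun ρ => by
    rw [hdbl, card_image_of_injective _ hG]
  have hh2 : ∀ r, bohr Γh r ⊆ bohr Γ (2 * r) := by
    intro r y hy
    rw [hdbl] at hy
    obtain ⟨z, hz, rfl⟩ := mem_image.1 hy
    rw [two_mul]; exact add_mem_bohr hz hz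
  have g2h := reg_half hcard g2
  have g3h := reg_half hcard g3
  have g4h := reg_half hcard g4
  have g5h := reg_half hcard g5
  set A1 := (bohr Γ R1).filter fun b => x + b ∈ A with hA1
  set A2 := (bohr Γ R2).filter fun b => x + b ∈ A with hA2
  have hd10 : 0 < d1 := by linarith
  have hA1c : (A1.card : ℝ) = d1 * (bohr Γ R1).card := by
    rw [hd1, div_mul_cancel₀ _ c1.ne']
  have hA2c : (A2.card : ℝ) = d2 * (bohr Γ R2).card := by
    rw [hd2, div_mul_cancel₀ _ c2.ne']
  have hd1u : d1 ≤ 1 := by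
    rw [hd1, div_le_one c1]
    exact_mod_cast card_le_card (filter_subset _ _)
  clear hd1 hd2
  have hmR : ∀ v, mrep (bohr Γh R3) (bohr Γh R4) v ≠ 0 → v ∈ bohr Γh (R3 + R4) := by
    intro v hv
    obtain ⟨e, he, f, hf, rfl⟩ := mrep_ne hv
    exact add_mem_bohr he hf
  have hε2 := P.ε2
  have h2ε : ∀ (y : ℝ), 0 ≤ y → (1 + ε) * y ≤ 2 * y := fun y hy => by gcongr; linarith
  have hlift := lift_main (A := A1) (B := bohr Γ R1) (C := A2.image fun y => y + y)
    (W := bohr Γh R2) (Wp := bohr Γh (R2 + κ * R2)) (mrep (bohr Γh R3) (bohr Γh R4))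
    (α := d1) (α₂ := 124 / 125 * a) (ε := ε) (θ := 1 / 200) P.pe (mrep_nonneg _ _)
    (mrep_neg (fun _ => neg_mem_bohr) (fun _ => neg_mem_bohr)) (filter_subset _ _) hd10
    (by linarith) hA1c
    (by
      have hm : ((bohr Γ (κ * ρ / 2)).card : ℝ) ≤ (bohr Γ R1).card := by
        exact_mod_cast card_le_card (bohr_mono l1)
      have hα0 := P.α0
      have h1 : 124 / 125 * α ≤ d1 := by linarith
      calc (4 : ℝ) ≤ (124 / 125) ^ 2 * 5 := by norm_num
        _ ≤ (124 / 125) ^ 2 * (α ^ 2 * (bohr Γ (κ * ρ / 2)).card) := by gcongr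
        _ = (124 / 125 * α) ^ 2 * (bohr Γ (κ * ρ / 2)).card := by ring
        _ ≤ d1 ^ 2 * (bohr Γ R1).card := by gcongr)
    P.ε0 (by linarith) (by linarith)
    (by
      intro w hw
      obtain ⟨y, hy, rfl⟩ := mem_image.1 hw
      have hy2 : y + y ∈ bohr Γ (κ * R1) := by
        refine bohr_mono ?_ (add_mem_bohr (mem_filter.1 hy).1 (mem_filter.1 hy).1)
        linarith
      have := reg_shift hκ.le g1 (neg_mem_bohr.2 hy2)
      refine le_trans ?_ this
      have : ((bohr Γ R1).filter fun x => y + y - x ∉ bohr Γ R1) =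
          (bohr Γ R1).filter fun x => x + -(y + y) ∉ bohr Γ R1 := by
        refine filter_congr fun z _ => ?_
        rw [← neg_mem_bohr]
        have : -(y + y - z) = z + -(y + y) := by abel
        rw [this]
      rw [this])
    (by
      intro w hw
      obtain ⟨y, hy, rfl⟩ := mem_image.1 hw
      have : (A1.filter fun z => y + y - z ∈ A1) ⊆ {y} := by
        intro z hz
        rw [mem_filter] at hz
        have t1 := (mem_filter.1 hz.1).2
        have t2 := (mem_filter.1 hz.2).2
        have t3 := (mem_filter.1 hy).2
        have t4 := hA _ t1 _ t2 _ t3 (by abel)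
        have t5 : z = y + y - z := add_left_cancel t4
        have t6 : z + z = y + y := by
          nth_rewrite 2 [t5]; abel
        rw [mem_singleton]
        exact hG t6
      have := card_le_card this
      rw [card_singleton] at this
      exact_mod_cast this)
    (by
      rw [hdbl]
      exact image_subset_image (filter_subset _ _))
    (by
      rw [card_image_of_injective _ hG, hA2c, hcard]
      gcongr)
    (bohr_card_pos p2.le)
    (by
      intro w hw v v' hv hv'
      refine bohr_mono ?_ (add_mem_bohr (sub_mem_bohr hw (hmR v hv)) (hmR v' hv'))
      linarith)
    (g2h.2.trans (h2ε _ (by positivity)))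
    (by
      have h1 := P.p2
      have h2 : α * 2 ^ p ≤ a * 2 ^ p := by gcongr
      linarith)
    (by
      intro v v' hv hv'
      refine reg_shift hκ.le g1 ?_
      refine bohr_mono ?_ (hh2 _ (sub_mem_bohr (hmR v hv) (hmR v' hv')))
      linarith)
  have hT := theta_remove (E := bohr Γh R3) (F := bohr Γh R4) ⟨0, zero_mem_bohr p3.le⟩
    ⟨0, zero_mem_bohr p4.le⟩ (fun w => dc (ind A1) w / (d1 ^ 2 * (bohr Γ R1).card))
    (fun w => div_nonneg (sum_nonneg fun _ _ => mul_nonneg (ind_nonneg _ _) (ind_nonneg _ _))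
      (by positivity)) P.p17 hlift
  obtain ⟨Δ, hΔ, hcore⟩ := core (A := A1) (B := bohr Γ R1) (E := bohr Γh R3) (F := bohr Γh R4)
    (Ep := bohr Γh (R3 + R4)) (Fp := bohr Γh (R4 + κ * R4)) (Bs := bohr Γh R5)
    (Y := bohr Γh (R3 + κ * R3)) (α := d1) (τ := τ) (η := η) (ε := ε) (ζ := ζ) (L := L) (σ := σ)
    (p := p) (k := k) (r := r) (K := K) hd10 hA1c hn1 ⟨0, zero_mem_bohr p3.le⟩
    ⟨0, zero_mem_bohr p4.le⟩ ⟨0, zero_mem_bohr p5.le⟩ P.τ0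
    (by
      refine P.τ1.trans ?_
      have hα0 := P.α0
      have : α / 2 ≤ d1 := by linarith
      gcongr)
    hT
    (fun e he f hf => sub_mem_bohr he hf)
    (by
      refine le_trans ?_ (g3h.2.trans (h2ε _ (by positivity)))
      exact_mod_cast card_le_card (bohr_mono (by linarith)))
    (fun y hy t ht => bohr_mono (by linarith) (add_mem_bohr hy ht))
    (g4h.2.trans (h2ε _ (by positivity)))
    (fun s hs y hy => bohr_mono (by linarith) (add_mem_bohr hs hy))
    (g3h.2.trans (h2ε _ (by positivity)))
    P.k0 P.η0 P.η1 P.kη P.L0 P.Lτ P.K0 P.ζ0.le P.ε0 P.σ1 P.σ2 P.err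
  have hcU : (Γh ∪ Δ).card ≤ Γ.card + K := (card_union_le _ _).trans (by omega)
  obtain ⟨R6, l6, u6, g6⟩ := exists_reg hκ.le P.ε0 P.J1 P.J2 (Γh ∪ Δ) (hcU.trans hD)
    (ρ := κ * R5 * ζ) (by positivity)
  have p6 := g6.1
  have m6 : κ * R5 * ζ ≤ κ * R5 := mul_le_of_le_one_right (by positivity) P.ζ1
  have m7 : κ * R5 * ζ ≤ ζ := mul_le_of_le_one_left hζ.le (by linarith)
  have hsub : ∀ b ∈ bohr (Γh ∪ Δ) R6, b ∈ bohr Γh (κ * R5) := fun b hb =>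
    bohr_mono (u6.trans m6) (bohr_anti subset_union_left hb)
  obtain ⟨x', hx'⟩ := hcore (bohr (Γh ∪ Δ) R6) ⟨0, zero_mem_bohr p6.le⟩
    (fun b hb => bohr_mono (u6.trans m7) (bohr_anti subset_union_right hb))
    (fun b hb => reg_shift hκ.le g5h (hsub b hb))
    (fun b hb => by
      have := reg_shift hκ.le g5h (neg_mem_bohr.2 (hsub b hb))
      simpa only [sub_eq_add_neg] using this)
  refine ⟨Γh ∪ Δ, R6, x + x', hcU, ?_, by linarith, g6, ?_⟩
  · calc κ ^ 6 * ζ / 8192 * ρ ≤ κ ^ 6 * ζ / 4096 * ρ := by gcongr; norm_num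
      _ = κ * (κ ^ 5 * ρ / 2048) * ζ / 2 := by ring
      _ ≤ κ * R5 * ζ / 2 := by gcongr
      _ ≤ R6 := l6
  · have hle : ((bohr (Γh ∪ Δ) R6).filter fun b => x' + b ∈ A1).card ≤
        ((bohr (Γh ∪ Δ) R6).filter fun b => x + x' + b ∈ A).card := by
      refine card_le_card fun b hb => ?_
      rw [mem_filter] at hb ⊢
      refine ⟨hb.1, ?_⟩
      rw [add_assoc]
      exact (mem_filter.1 hb.2).2
    have hle' : (((bohr (Γh ∪ Δ) R6).filter fun b => x' + b ∈ A1).card : ℝ) ≤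
        ((bohr (Γh ∪ Δ) R6).filter fun b => x + x' + b ∈ A).card := by exact_mod_cast hle
    refine le_trans ?_ (hx'.trans hle')
    exact mul_le_mul_of_nonneg_right (by linarith) (by positivity)

end Step

end KM


open Finset

set_option linter.unusedSectionVars false
set_option linter.unusedDecidableInType false

namespace KM

section Iter

variable {G : Type*} [AddCommGroup G] [Fintype G] [DecidableEq G]

lemma bohr_size' {Γ : Finset (AddChar G ℂ)} {D m : ℕ} {ρ : ℝ} (hΓ : Γ.card ≤ D)
    (hm : 2 * (1 / 2) ^ m ≤ ρ) :
    (Fintype.card G : ℝ) ≤ 81 ^ (D * m) * (bohr Γ ρ).card := by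
  have h := bohr_size Γ m
  have h' : (Fintype.card G : ℝ) ≤ 81 ^ (Γ.card * m) * (bohr Γ (2 * (1 / 2) ^ m)).card := by
    exact_mod_cast h
  refine h'.trans ?_
  have h2 : ((bohr Γ (2 * (1 / 2) ^ m)).card : ℝ) ≤ (bohr Γ ρ).card := by
    exact_mod_cast card_le_card (bohr_mono hm)
  gcongr
  norm_num

lemma iter {α ε κ ζ τ η L σ : ℝ} {p k r K D J I m : ℕ} (P : Par α ε κ ζ τ η L σ p k r K D J)
    (hG : Function.Injective fun x : G => x + x) {A : Finset G}
    (hA : ∀ x ∈ A, ∀ y ∈ A, ∀ z ∈ A, x + y = z + z → x = y)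
    (hI : I * K ≤ D) (h1 : 1 < (251 / 250) ^ I * α)
    (hm : 2 * (1 / 2) ^ m ≤ κ * (κ ^ 6 * ζ / 8192) ^ I / 2)
    (hsz : 5 * 81 ^ (D * m) ≤ α ^ 2 * Fintype.card G)
    (hc : α * Fintype.card G ≤ A.card) : False := by
  classical
  have hκ := P.κ0
  have hζ := P.ζ0
  have hα := P.α0
  set q := κ ^ 6 * ζ / 8192 with hq
  have hq0 : 0 < q := by positivity
  have hq1 : q ≤ 1 := by
    have a1 : κ ^ 6 ≤ 1 := pow_le_one₀ hκ.le (by linarith [P.κ1])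
    have a2 : κ ^ 6 * ζ ≤ 1 := mul_le_one₀ a1 hζ.le P.ζ1
    rw [hq]; linarith
  have key : ∀ i ≤ I, ∃ (Γ : Finset (AddChar G ℂ)) (ρ : ℝ) (x : G), Γ.card ≤ i * K ∧
      q ^ i ≤ ρ ∧ ρ ≤ 1 ∧ Reg κ ε Γ ρ ∧
      ((251 / 250) ^ i * α) * (bohr Γ ρ).card ≤ ((bohr Γ ρ).filter fun b => x + b ∈ A).card := by
    intro i
    induction i with
    | zero =>
      intro _
      have hu : ∀ ρ, bohr (∅ : Finset (AddChar G ℂ)) ρ = univ := fun ρ => by ext x; simp [mem_bohr]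
      refine ⟨∅, 1, 0, by simp, by simp, le_rfl, ⟨one_pos, ?_⟩, ?_⟩
      · rw [hu, hu]
        have := P.ε0
        have h0 : (0 : ℝ) ≤ (univ : Finset G).card := by positivity
        nlinarith
      · rw [hu]
        simpa using hc
    | succ i ih =>
      intro hi
      obtain ⟨Γ, ρ, x, h1, h2, h3, h4, h5⟩ := ih (by omega)
      have hΓ : Γ.card + K ≤ D := by
        have : (i + 1) * K ≤ I * K := Nat.mul_le_mul_right _ hi
        have e : (i + 1) * K = i * K + K := by ring
        omega
      have hone : (1 : ℝ) ≤ (251 / 250) ^ i := one_le_pow₀ (by norm_num)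
      obtain ⟨Γ', ρ', x', k1, k2, k3, k4, k5⟩ := step P hG hA hΓ h4 h3
        (a := (251 / 250) ^ i * α) (by nlinarith) h5 (by
          have hρ : κ * q ^ I / 2 ≤ κ * ρ / 2 := by
            have : q ^ I ≤ q ^ i := pow_le_pow_of_le_one hq0.le hq1 (by omega)
            have : q ^ I ≤ ρ := this.trans h2
            gcongr
          have hb := bohr_size' (Γ := Γ) (D := D) (m := m) (by omega) (hm.trans hρ)
          have h6 : 5 * (81 : ℝ) ^ (D * m) ≤
              81 ^ (D * m) * (α ^ 2 * (bohr Γ (κ * ρ / 2)).card) := by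
            calc _ ≤ α ^ 2 * Fintype.card G := hsz
              _ ≤ α ^ 2 * (81 ^ (D * m) * (bohr Γ (κ * ρ / 2)).card) := by gcongr
              _ = _ := by ring
          rw [mul_comm (5 : ℝ)] at h6
          exact le_of_mul_le_mul_left h6 (by positivity))
      refine ⟨Γ', ρ', x', ?_, ?_, k3.trans h3, k4, ?_⟩
      · have e : (i + 1) * K = i * K + K := by ring
        omega
      · calc q ^ (i + 1) = q * q ^ i := by ring
          _ ≤ q * ρ := by gcongr
          _ ≤ ρ' := k2
      · refine le_trans (le_of_eq ?_) k5
        rw [pow_succ]; ring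
  obtain ⟨Γ, ρ, x, -, -, -, h4, h5⟩ := key I le_rfl
  have c0 : (0 : ℝ) < (bohr Γ ρ).card := by exact_mod_cast bohr_card_pos h4.1.le
  have h6 : (((bohr Γ ρ).filter fun b => x + b ∈ A).card : ℝ) ≤ (bohr Γ ρ).card := by
    exact_mod_cast card_le_card (filter_subset _ _)
  nlinarith

/-- polynomially bounded sequences -/
def PB (f : ℕ → ℕ) : Prop := ∃ c d : ℕ, ∀ n, f n ≤ c * (n + 1) ^ d

lemma PB.const (a : ℕ) : PB fun _ => a := ⟨a, 0, fun n => by simp⟩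

lemma PB.id : PB fun n => n := ⟨1, 1, fun n => by simp⟩

lemma PB.add {f g : ℕ → ℕ} (hf : PB f) (hg : PB g) : PB fun n => f n + g n := by
  obtain ⟨c, d, h⟩ := hf
  obtain ⟨c', d', h'⟩ := hg
  refine ⟨c + c', d + d', fun n => ?_⟩
  have h1 : (n + 1) ^ d ≤ (n + 1) ^ (d + d') := Nat.pow_le_pow_right (by omega) (by omega)
  have h2 : (n + 1) ^ d' ≤ (n + 1) ^ (d + d') := Nat.pow_le_pow_right (by omega) (by omega)
  calc f n + g n ≤ c * (n + 1) ^ d + c' * (n + 1) ^ d' := add_le_add (h n) (h' n)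
    _ ≤ c * (n + 1) ^ (d + d') + c' * (n + 1) ^ (d + d') := by gcongr
    _ = _ := by ring

lemma PB.mul {f g : ℕ → ℕ} (hf : PB f) (hg : PB g) : PB fun n => f n * g n := by
  obtain ⟨c, d, h⟩ := hf
  obtain ⟨c', d', h'⟩ := hg
  refine ⟨c * c', d + d', fun n => ?_⟩
  calc f n * g n ≤ (c * (n + 1) ^ d) * (c' * (n + 1) ^ d') := Nat.mul_le_mul (h n) (h' n)
    _ = _ := by ring

lemma PB.eventually {f : ℕ → ℕ} (hf : PB f) : ∃ n₀, ∀ n ≥ n₀, f n ≤ 2 ^ n := by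
  obtain ⟨c, d, h⟩ := hf
  have ht := tendsto_pow_const_mul_const_pow_of_abs_lt_one d
    (r := (1 / 2 : ℝ)) (by rw [abs_of_pos] <;> norm_num)
  have hc : (0 : ℝ) < 1 / (2 * (c + 1)) := by positivity
  obtain ⟨n₀, hn₀⟩ := Filter.eventually_atTop.1 (ht.eventually_lt_const hc)
  refine ⟨n₀, fun n hn => ?_⟩
  have h1 := hn₀ (n + 1) (by omega)
  have h2 : (f n : ℝ) ≤ c * (n + 1) ^ d := by exact_mod_cast h n
  rw [lt_div_iff₀ (by positivity)] at h1
  push_cast at h1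
  have h3 : ((1 : ℝ) / 2) ^ (n + 1) * 2 ^ (n + 1) = 1 := by rw [← mul_pow]; norm_num
  have h5 : ((n : ℝ) + 1) ^ d * (c + 1) ≤ 2 ^ n := by
    have h4 := mul_le_mul_of_nonneg_right h1.le (by positivity : (0 : ℝ) ≤ 2 ^ n)
    have e : ((n : ℝ) + 1) ^ d * (1 / 2) ^ (n + 1) * (2 * (c + 1)) * 2 ^ n =
        ((n : ℝ) + 1) ^ d * (c + 1) * ((1 / 2) ^ (n + 1) * 2 ^ (n + 1)) := by
      rw [pow_succ (2 : ℝ)]; ring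
    rw [e, h3] at h4
    linarith
  have h6 : (f n : ℝ) ≤ 2 ^ n := by
    have : (0 : ℝ) ≤ ((n : ℝ) + 1) ^ d := by positivity
    linarith
  exact_mod_cast h6

/-! ### explicit parameters -/

def fp (n : ℕ) : ℕ := 2 * n + 44
def fs (n : ℕ) : ℕ := (n + 1) * (8 * fp n) + 2
def fr (n : ℕ) : ℕ := fs n + 11
def fk (n : ℕ) : ℕ := 4 * (16 + fr n + fs n) * ((4096 * fr n) * (4096 * fr n))
def fK (n : ℕ) : ℕ := 80 * (1 + fk n * (fs n + 1))
def fe (n : ℕ) : ℕ := fK n + fs n + 14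
def fI (n : ℕ) : ℕ := 250 * n + 1
def fD (n : ℕ) : ℕ := fI n * fK n
def fcc (n : ℕ) : ℕ := 7 * fD n + fe n + 4
def fm (n : ℕ) : ℕ := fcc n + fI n * (6 * fcc n + fe n + 13) + 2
def fM (n : ℕ) : ℕ := 7 * (fD n * fm n) + 3 + 2 * n

lemma pb_fM : PB fM := by
  have hn := PB.id
  have hp : PB fp := ((PB.const 2).mul hn).add (PB.const 44)
  have hs : PB fs := ((hn.add (PB.const 1)).mul ((PB.const 8).mul hp)).add (PB.const 2)
  have hr : PB fr := hs.add (PB.const 11)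
  have hk : PB fk := ((PB.const 4).mul (((PB.const 16).add hr).add hs)).mul
    (((PB.const 4096).mul hr).mul ((PB.const 4096).mul hr))
  have hK : PB fK := (PB.const 80).mul ((PB.const 1).add (hk.mul (hs.add (PB.const 1))))
  have he : PB fe := (hK.add hs).add (PB.const 14)
  have hI : PB fI := ((PB.const 250).mul hn).add (PB.const 1)
  have hD : PB fD := hI.mul hK
  have hc : PB fcc := (((PB.const 7).mul hD).add he).add (PB.const 4)
  have hm : PB fm := (hc.add (hI.mul ((((PB.const 6).mul hc).add he).add (PB.const 13)))).add
    (PB.const 2)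
  exact (((PB.const 7).mul (hD.mul hm)).add (PB.const 3)).add ((PB.const 2).mul hn)

lemma two_pow_half (a : ℕ) : (2 : ℝ) ^ a * (1 / 2) ^ a = 1 := by rw [← mul_pow]; norm_num

lemma nat_le_pow (a : ℕ) : (a : ℝ) ≤ 2 ^ a := by exact_mod_cast Nat.lt_two_pow_self.le

set_option maxHeartbeats 2000000 in
lemma par (n : ℕ) : Par ((1 / 2) ^ n) ((1 / 2) ^ fe n) ((1 / 2) ^ fcc n) ((1 / 2) ^ fe n)
    ((1 / 2) ^ fs n) (1 / (4096 * fr n)) (2 ^ fs n) ((1 / 2) ^ (fs n + 10)) (fp n) (fk n) (fr n)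
    (fK n) (fD n) (7 * fD n * 2 ^ fe n) where
  α0 := by positivity
  κ0 := by positivity
  κ1 := by
    calc ((1 : ℝ) / 2) ^ fcc n ≤ (1 / 2) ^ 2 :=
          pow_le_pow_of_le_one (by norm_num) (by norm_num) (by unfold fcc; omega)
      _ = _ := by norm_num
  ε0 := by positivity
  ε1 := by
    have h : n + 10 ≤ fe n := by
      unfold fe fs fp
      nlinarith [Nat.zero_le (fK n)]
    calc ((1 : ℝ) / 2) ^ fe n ≤ (1 / 2) ^ (n + 10) :=
          pow_le_pow_of_le_one (by norm_num) (by norm_num) h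
      _ = (1 / 2) ^ n * (1 / 1024) := by rw [pow_add]; norm_num
      _ ≤ _ := by
        have : (0 : ℝ) < (1 / 2) ^ n := by positivity
        linarith
  ε2 := pow_le_one₀ (by norm_num) (by norm_num)
  J1 := by
    have h1 := nat_le_pow (7 * fD n)
    have h2 := two_pow_half (7 * fD n)
    have h3 := two_pow_half (fe n)
    have e : ((1 : ℝ) / 2) ^ fcc n = (1 / 2) ^ (7 * fD n) * (1 / 2) ^ (fe n) * (1 / 16) := by
      unfold fcc; rw [pow_add, pow_add]; norm_num
    rw [e]
    push_cast at h1 ⊢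
    calc (1 / 2 : ℝ) ^ (7 * fD n) * (1 / 2) ^ (fe n) * (1 / 16) * (7 * fD n * 2 ^ fe n) =
        (1 / 2 : ℝ) ^ (7 * fD n) * (7 * fD n) * (2 ^ fe n * (1 / 2) ^ (fe n)) / 16 := by ring
      _ = (7 * fD n) * (1 / 2 : ℝ) ^ (7 * fD n) / 16 := by rw [h3]; ring
      _ ≤ 2 ^ (7 * fD n) * (1 / 2 : ℝ) ^ (7 * fD n) / 16 := by gcongr
      _ = 1 / 16 := by rw [h2]
      _ ≤ 1 / 2 := by norm_num
  J2 := by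
    have hD : fD n ≠ 0 := by
      have : 0 < fD n := by unfold fD fI fK; positivity
      omega
    have hb : (2 : ℝ) ≤ (1 + (1 / 2) ^ fe n) ^ (2 ^ fe n) := by
      have := one_add_mul_le_pow (a := ((1 : ℝ) / 2) ^ fe n)
        (le_trans (by norm_num) (by positivity : (0 : ℝ) ≤ (1 / 2) ^ fe n)) (2 ^ fe n)
      push_cast at this
      rw [two_pow_half] at this
      linarith
    calc (81 : ℝ) ^ fD n < 128 ^ fD n := pow_lt_pow_left₀ (by norm_num) (by norm_num) hD
      _ = 2 ^ (7 * fD n) := by rw [pow_mul]; norm_num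
      _ ≤ ((1 + (1 / 2) ^ fe n) ^ (2 ^ fe n)) ^ (7 * fD n) := by gcongr
      _ = _ := by rw [← pow_mul, mul_comm (2 ^ fe n)]
  pe := ⟨n + 22, by unfold fp; ring⟩
  p17 := by unfold fp; omega
  p2 := by
    have h := two_pow_half n
    have h1 : (1 : ℝ) ≤ 2 ^ n := one_le_pow₀ (by norm_num)
    calc (4 : ℝ) ≤ 2 ^ 44 := by norm_num
      _ = (2 ^ n * (1 / 2) ^ n) * 2 ^ 44 := by rw [h]; ring
      _ ≤ (2 ^ n * (1 / 2) ^ n) * 2 ^ 44 * 2 ^ n :=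
        le_mul_of_one_le_right (by positivity) h1
      _ = _ := by unfold fp; ring
  τ0 := by positivity
  τ1 := by
    apply le_of_eq
    have : ((1 : ℝ) / 2) ^ n / 2 = (1 / 2) ^ (n + 1) := by rw [pow_succ]; ring
    rw [this, ← pow_mul]
    unfold fs
    rw [pow_add]; norm_num
    ring
  k0 := by unfold fk fr; positivity
  η0 := by
    have : (0 : ℝ) < fr n := by unfold fr; positivity
    positivity
  η1 := by
    have : (1 : ℝ) ≤ fr n := by unfold fr; push_cast; linarith [(Nat.cast_nonneg (fs n) : (0 : ℝ) ≤ _)]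
    rw [div_le_one (by positivity)]
    linarith
  kη := by
    have hr : (0 : ℝ) < fr n := by unfold fr; positivity
    have e : (fk n : ℝ) * (1 / (4096 * fr n)) ^ 2 / 4 = ((16 + fr n + fs n : ℕ) : ℝ) := by
      unfold fk; push_cast; field_simp
    rw [e]
    have h1 : Real.exp (-((16 + fr n + fs n : ℕ) : ℝ)) ≤ (1 / 2) ^ (16 + fr n + fs n) := by
      rw [Real.exp_neg, ← Real.exp_one_pow, ← inv_pow]
      gcongr
      rw [one_div]
      apply inv_anti₀ (by norm_num)
      linarith [Real.add_one_le_exp (1 : ℝ)]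
    have h2 := nat_le_pow (fr n)
    have h3 := two_pow_half (fr n)
    calc 16 * Real.exp (-((16 + fr n + fs n : ℕ) : ℝ)) ≤ 16 * (1 / 2) ^ (16 + fr n + fs n) := by gcongr
      _ = 1 / 4096 * (1 / 2) ^ fr n * (1 / 2) ^ fs n := by
        rw [pow_add, pow_add]; norm_num; ring
      _ ≤ _ := by
        gcongr
        rw [le_div_iff₀ (by positivity)]
        calc 1 / 4096 * (1 / 2 : ℝ) ^ fr n * (4096 * fr n) = fr n * (1 / 2) ^ fr n := by ring
          _ ≤ 2 ^ fr n * (1 / 2) ^ fr n := by gcongr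
          _ = 1 := h3
  L0 := by positivity
  Lτ := by
    have h3 := two_pow_half (fs n)
    calc (2 : ℝ) = 2 ^ 1 := by norm_num
      _ ≤ 2 ^ fs n := pow_le_pow_right₀ (by norm_num) (by unfold fs; omega)
      _ = 2 ^ fs n * (2 ^ fs n * (1 / 2) ^ fs n) := by rw [h3, mul_one]
      _ = _ := by ring
  K0 := by
    have e : Real.log (2 / (1 / 2) ^ fs n) = (fs n + 1) * Real.log 2 := by
      have : (2 : ℝ) / (1 / 2) ^ fs n = 2 ^ (fs n + 1) := by
        rw [one_div, inv_pow, div_inv_eq_mul, pow_succ]; ring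
      rw [this, Real.log_pow]; push_cast; ring
    rw [e]
    have hl : Real.log 2 ≤ 1 := by linarith [Real.log_two_lt_d9]
    have hl0 : 0 ≤ Real.log 2 := Real.log_nonneg (by norm_num)
    unfold fK
    push_cast
    have : (fk n : ℝ) * ((fs n + 1) * Real.log 2) ≤ fk n * ((fs n + 1) * 1) := by gcongr
    linarith
  ζ0 := by positivity
  ζ1 := pow_le_one₀ (by norm_num) (by norm_num)
  σ1 := by
    have e : (2 : ℝ) / 4 ^ fr n = 2 * (1 / 2) ^ (2 * fr n) := by
      rw [pow_mul, show ((1 : ℝ) / 2) ^ 2 = 1 / 4 by norm_num, div_pow, one_pow]; ring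
    rw [e]
    have : ((1 : ℝ) / 2) ^ (fs n + 10) = 2 * (1 / 2) ^ (fs n + 11) := by
      rw [pow_succ _ (fs n + 10)]; ring
    rw [this]
    gcongr ?_ * ?_
    exact pow_le_pow_of_le_one (by norm_num) (by norm_num) (by unfold fr; omega)
  σ2 := by
    have h1 := nat_le_pow (fK n)
    have h3 := two_pow_half (fK n)
    have e : ((1 : ℝ) / 2) ^ fe n = (1 / 2) ^ fK n * ((1 / 2) ^ (fs n + 10) / 16) := by
      unfold fe; rw [add_assoc, pow_add, show fs n + 14 = fs n + 10 + 4 from rfl, pow_add _ (fs n + 10)]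
      norm_num; ring
    set σ := ((1 : ℝ) / 2) ^ (fs n + 10) with hσ
    have hσ0 : 0 < σ := by positivity
    have hσ1 : σ ≤ 1 := pow_le_one₀ (by norm_num) (by norm_num)
    have e2 : 2 ^ fK n * ((1 : ℝ) / 2) ^ fe n = σ / 16 := by
      rw [e, ← mul_assoc, h3, one_mul]
    have h4 : (fK n : ℝ) * (1 / 2) ^ fe n ≤ σ / 16 := by
      rw [← e2]; gcongr
    have h5 : 0 ≤ (fK n : ℝ) * (1 / 2) ^ fe n := by positivity
    have h6 := Real.abs_exp_sub_one_le (x := (fK n : ℝ) * (1 / 2) ^ fe n)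
      (by rw [abs_of_nonneg h5]; linarith)
    rw [abs_of_nonneg h5] at h6
    have h7 := (abs_le.1 h6).2
    linarith
  err := by
    have hr : (0 : ℝ) < fr n := by unfold fr; positivity
    have e1 : 3 * (fr n : ℝ) * (1 / (4096 * fr n)) = 3 / 4096 := by field_simp
    have e2 : ((1 : ℝ) / 2) ^ (fs n + 10) * 2 ^ fs n = 1 / 1024 := by
      rw [pow_add, mul_comm, ← mul_assoc, two_pow_half]; norm_num
    have e3 : ((4 : ℝ) / 5) ^ fp n ≤ (4 / 5) ^ 44 :=
      pow_le_pow_of_le_one (by norm_num) (by norm_num) (by unfold fp; omega)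
    rw [e1, e2]
    have e4 : ((4 : ℝ) / 5) ^ 44 ≤ 1 / 1000 := by norm_num
    linarith

theorem group_main (n : ℕ) (hG : Function.Injective fun x : G => x + x)
    (hsz : 2 ^ fM n ≤ Fintype.card G) (A : Finset G)
    (hA : ∀ x ∈ A, ∀ y ∈ A, ∀ z ∈ A, x + y = z + z → x = y)
    (hc : (1 / 2 : ℝ) ^ n * Fintype.card G ≤ A.card) : False := by
  refine iter (I := fI n) (m := fm n) (par n) hG hA le_rfl ?_ ?_ ?_ hc
  · have h1 : (2 : ℝ) ^ n ≤ (251 / 250) ^ (250 * n) := by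
      rw [pow_mul]
      gcongr
      have := one_add_mul_le_pow (a := (1 / 250 : ℝ)) (by norm_num) 250
      norm_num at this ⊢
    have h2 := two_pow_half n
    calc (1 : ℝ) < 251 / 250 := by norm_num
      _ = 2 ^ n * (1 / 2) ^ n * (251 / 250) := by rw [h2]; ring
      _ ≤ (251 / 250) ^ (250 * n) * (1 / 2) ^ n * (251 / 250) := by gcongr
      _ = _ := by unfold fI; rw [pow_succ]; ring
  · apply le_of_eq
    have e1 : (((1 : ℝ) / 2) ^ fcc n) ^ 6 * (1 / 2) ^ fe n / 8192 =
        (1 / 2) ^ (6 * fcc n + fe n + 13) := by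
      rw [← pow_mul, pow_add, pow_add, mul_comm 6]; norm_num; ring
    rw [e1, ← pow_mul]
    unfold fm
    rw [pow_add, pow_add, mul_comm (fI n)]; norm_num; ring
  · have h1 : (2 : ℝ) ^ fM n ≤ Fintype.card G := by exact_mod_cast hsz
    have h2 := two_pow_half n
    calc (5 : ℝ) * 81 ^ (fD n * fm n) ≤ 8 * 128 ^ (fD n * fm n) := by gcongr <;> norm_num
      _ = (2 ^ n * (1 / 2) ^ n) ^ 2 * (8 * 128 ^ (fD n * fm n)) := by rw [h2]; ring
      _ = ((1 / 2) ^ n) ^ 2 * 2 ^ fM n := by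
        unfold fM
        rw [pow_add, pow_add, pow_mul _ 7]; norm_num; ring
      _ ≤ _ := by gcongr

end Iter

end KM


open Finset

set_option linter.unusedSectionVars false
set_option linter.unusedDecidableInType false

namespace KM

section Final

lemma zmod_main (n N : ℕ) (hsz : 2 ^ fM n ≤ 2 * N + 1) (S : Finset ℕ) (hS : ∀ x ∈ S, x ≤ N)
    (hA : ∀ x ∈ S, ∀ y ∈ S, ∀ z ∈ S, x + y = z + z → x = y)
    (hc : (1 / 2 : ℝ) ^ n * (2 * N + 1) ≤ S.card) : False := by
  classical
  have hmod : ∀ a b : ℕ, a ≤ 2 * N → b ≤ 2 * N → (a : ZMod (2 * N + 1)) = b → a = b := by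
    intro a b ha hb h
    rw [ZMod.natCast_eq_natCast_iff] at h
    exact Nat.ModEq.eq_of_lt_of_lt h (by omega) (by omega)
  have hG : Function.Injective fun x : ZMod (2 * N + 1) => x + x := by
    intro x y hxy
    have h1 : ((N : ZMod (2 * N + 1)) + 1) + (N + 1) = 1 := by
      have : ((2 * N + 1 : ℕ) : ZMod (2 * N + 1)) = 0 := ZMod.natCast_self _
      push_cast at this
      linear_combination this
    have hxy' : x + x = y + y := hxy
    calc x = (((N : ZMod (2 * N + 1)) + 1) + (N + 1)) * x := by rw [h1, one_mul]
      _ = ((N : ZMod (2 * N + 1)) + 1) * (x + x) := by ring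
      _ = ((N : ZMod (2 * N + 1)) + 1) * (y + y) := by rw [hxy']
      _ = (((N : ZMod (2 * N + 1)) + 1) + (N + 1)) * y := by ring
      _ = y := by rw [h1, one_mul]
  have hinj : Set.InjOn (fun x : ℕ => (x : ZMod (2 * N + 1))) S := by
    intro x hx y hy hxy
    have h1 := hS x hx
    have h2 := hS y hy
    exact hmod x y (by omega) (by omega) hxy
  refine group_main n hG (by rw [ZMod.card]; exact hsz)
    (S.image fun x : ℕ => (x : ZMod (2 * N + 1))) ?_ ?_
  · intro x hx y hy z hz hxy
    obtain ⟨a, ha, rfl⟩ := mem_image.1 hx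
    obtain ⟨b, hb, rfl⟩ := mem_image.1 hy
    obtain ⟨c, hc, rfl⟩ := mem_image.1 hz
    have h1 := hS a ha
    have h2 := hS b hb
    have h3 := hS c hc
    have := hmod (a + b) (c + c) (by omega) (by omega) (by push_cast; exact hxy)
    rw [hA a ha b hb c hc this]
  · rw [card_image_of_injOn hinj, ZMod.card]
    push_cast
    exact hc

lemma nat_main : ∃ T : ℝ, ∀ N : ℕ, T ≤ Real.log N → ∀ S : Finset ℕ, (∀ x ∈ S, x ≤ N) →
    (∀ x ∈ S, ∀ y ∈ S, ∀ z ∈ S, x + y = z + z → x = y) →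
    N / (Real.log N) ^ 2 ≤ S.card → False := by
  obtain ⟨n₀, hn₀⟩ := (((PB.const 6).mul (pb_fM.mul pb_fM))).eventually
  refine ⟨2 ^ n₀ + 1, fun N hN S hS hA hc => ?_⟩
  set t := Real.log N with ht
  have h2n : (1 : ℝ) ≤ 2 ^ n₀ := one_le_pow₀ (by norm_num)
  have ht1 : 1 ≤ t := by linarith
  have hN0 : 1 ≤ N := by
    rcases Nat.eq_zero_or_pos N with h | h
    · subst h; simp at ht; linarith
    · exact h
  have hN1 : (1 : ℝ) ≤ N := by exact_mod_cast hN0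
  obtain ⟨j, hj1, hj2⟩ := exists_nat_pow_near (x := 3 * t ^ 2) (y := (2 : ℝ)) (by nlinarith)
    (by norm_num)
  have hjn : n₀ ≤ j + 1 := by
    by_contra hcon
    have : (2 : ℝ) ^ (j + 1) ≤ 2 ^ n₀ := pow_le_pow_right₀ (by norm_num) (by omega)
    nlinarith
  have hM := hn₀ (j + 1) hjn
  have hM' : (6 : ℝ) * (fM (j + 1) * fM (j + 1)) ≤ 2 ^ (j + 1) := by exact_mod_cast hM
  have hMt : (fM (j + 1) : ℝ) ≤ t := by
    rw [pow_succ] at hM'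
    nlinarith
  have hpow : (2 : ℝ) ^ fM (j + 1) ≤ N := by
    calc (2 : ℝ) ^ fM (j + 1) ≤ (Real.exp 1) ^ fM (j + 1) := by
          gcongr
          linarith [Real.add_one_le_exp (1 : ℝ)]
      _ = Real.exp (fM (j + 1)) := Real.exp_one_pow _
      _ ≤ Real.exp t := Real.exp_le_exp.2 hMt
      _ = N := Real.exp_log (by linarith)
  refine zmod_main (j + 1) N ?_ S hS hA ?_
  · have : 2 ^ fM (j + 1) ≤ N := by exact_mod_cast hpow
    omega
  · refine le_trans ?_ hc
    rw [le_div_iff₀ (by positivity), one_div, inv_pow]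
    calc ((2 : ℝ) ^ (j + 1))⁻¹ * (2 * N + 1) * t ^ 2 ≤
        ((2 : ℝ) ^ (j + 1))⁻¹ * (3 * N) * t ^ 2 := by gcongr; linarith
      _ = ((2 : ℝ) ^ (j + 1))⁻¹ * (3 * t ^ 2) * N := by ring
      _ ≤ ((2 : ℝ) ^ (j + 1))⁻¹ * 2 ^ (j + 1) * N := by gcongr
      _ = N := by rw [inv_mul_cancel₀ (by positivity), one_mul]

lemma prime_count : ∃ T : ℝ, ∀ N : ℕ, T ≤ Real.log N →
    N / (2 * Real.log N) ≤ (Nat.primeCounting N : ℝ) := by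
  refine ⟨10, fun N hN => ?_⟩
  have hN0 : N ≠ 0 := by rintro rfl; simp at hN; linarith
  have hNr : (0 : ℝ) < N := by exact_mod_cast Nat.pos_of_ne_zero hN0
  refine le_trans ?_ (Chebyshev.pi_ge N)
  rw [div_le_div_iff₀ (by linarith) (by linarith)]
  have h1 : Real.log (N + 1) ≤ N / 10 := by
    have h3 : (300 : ℝ) ≤ N := by
      have h : Real.exp 10 ≤ N := by
        rw [← Real.exp_log hNr]; exact Real.exp_le_exp.2 hN
      have h' := Real.add_one_le_exp (5 : ℝ)
      have e : Real.exp 10 = Real.exp 5 * Real.exp 5 := by rw [← Real.exp_add]; norm_num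
      have h6 : (1 : ℝ) + 5 + 5 ^ 2 / 2 ≤ Real.exp 5 := by
        have := Real.quadratic_le_exp_of_nonneg (x := 5) (by norm_num)
        linarith
      nlinarith
    have h4 := Real.add_one_le_exp ((N : ℝ) / 30)
    rw [Real.log_le_iff_le_exp (by linarith)]
    have e : Real.exp ((N : ℝ) / 10) = Real.exp (N / 30) ^ 3 := by
      rw [← Real.exp_nat_mul]; congr 1; push_cast; ring
    rw [e]
    have h5 : (N / 30 + 1 : ℝ) ^ 3 ≤ Real.exp (N / 30) ^ 3 := by gcongr
    have h6 : (11 : ℝ) ^ 2 ≤ (N / 30 + 1 : ℝ) ^ 2 := by gcongr; linarith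
    have h7 := mul_le_mul_of_nonneg_right h6 (by positivity : (0 : ℝ) ≤ N / 30 + 1)
    have h8 : (N / 30 + 1 : ℝ) ^ 3 = (N / 30 + 1 : ℝ) ^ 2 * (N / 30 + 1) := by ring
    linarith
  have h2 : (0.69 : ℝ) ≤ Real.log 2 := by linarith [Real.log_two_gt_d9]
  have h3 : N * (0.69 : ℝ) ≤ N * Real.log 2 := by gcongr
  have h4 : (N : ℝ) / 2 ≤ N * Real.log 2 - Real.log (N + 1) := by linarith
  have h5 := mul_le_mul_of_nonneg_right h4 (by linarith : (0 : ℝ) ≤ 2 * Real.log N)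
  linarith

end Final

end KM

-- main theorem
theorem roth_in_primes_improved :
    ∃ C : ℝ, 0 < C ∧ ∃ N₀ : ℕ, ∀ A : Set ℕ, (∀ n ∈ A, Nat.Prime n) →
      ∀ N : ℕ, N₀ ≤ N →
        (Nat.card {n : ℕ // n ∈ A ∧ n ≤ N} : ℝ) /
            (Nat.card {n : ℕ // Nat.Prime n ∧ n ≤ N} : ℝ) ≥
          C * Real.log (Real.log (Real.log N)) /
            (Real.log (Real.log N)) ^ ((1 : ℝ) / 3) →
        ∃ a ∈ A, ∃ d : ℤ, d ≠ 0 ∧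
          (∃ b ∈ A, (b : ℤ) = (a : ℤ) + d) ∧
          (∃ c ∈ A, (c : ℤ) = (a : ℤ) + 2 * d) := by
  classical
  obtain ⟨T₁, hT₁⟩ := KM.nat_main
  obtain ⟨T₂, hT₂⟩ := KM.prime_count
  set T := max (max T₁ T₂) (Real.exp (Real.exp 1)) with hT
  refine ⟨1, one_pos, ⌈Real.exp T⌉₊, fun A _ N hN hd => ?_⟩
  have hNT : T ≤ Real.log N := by
    have h1 : Real.exp T ≤ N := (Nat.le_ceil _).trans (by exact_mod_cast hN)
    rwa [Real.le_log_iff_exp_le ((Real.exp_pos _).trans_le h1)]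
  have hN1 : T₁ ≤ Real.log N := ((le_max_left _ _).trans (le_max_left _ _)).trans hNT
  have hN2 : T₂ ≤ Real.log N := ((le_max_right _ _).trans (le_max_left _ _)).trans hNT
  have hN3 : Real.exp (Real.exp 1) ≤ Real.log N := (le_max_right _ _).trans hNT
  have ht0 : 0 < Real.log N := (Real.exp_pos _).trans_le hN3
  have hy : Real.exp 1 ≤ Real.log (Real.log N) := by
    rwa [Real.le_log_iff_exp_le ht0]
  have hy0 : 0 < Real.log (Real.log N) := (Real.exp_pos _).trans_le hy
  have hz : 1 ≤ Real.log (Real.log (Real.log N)) := by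
    rwa [Real.le_log_iff_exp_le hy0]
  have hpi := hT₂ N hN2
  have hNpos : (0 : ℝ) < N := by
    have h1 : Real.exp T ≤ N := (Nat.le_ceil _).trans (by exact_mod_cast hN)
    exact (Real.exp_pos _).trans_le h1
  set S : Finset ℕ := (Finset.range (N + 1)).filter fun n => n ∈ A with hS
  have hScard : Nat.card {n : ℕ // n ∈ A ∧ n ≤ N} = S.card :=
    Nat.subtype_card S (fun x => by simp [hS, and_comm])
  have hPcard : Nat.card {n : ℕ // Nat.Prime n ∧ n ≤ N} = Nat.primeCounting N := by
    rw [Nat.primeCounting, Nat.primeCounting', Nat.count_eq_card_filter_range]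
    exact Nat.subtype_card _ (fun x => by simp [and_comm])
  rw [hScard, hPcard] at hd
  set t := Real.log N with ht
  set y := Real.log t with hyd
  have hy1 : 1 ≤ y := le_trans (by linarith [Real.add_one_le_exp (1 : ℝ)]) hy
  have hratio : 1 / y ≤ 1 * Real.log y / y ^ ((1 : ℝ) / 3) := by
    have hyp : y ^ ((1 : ℝ) / 3) ≤ y := by
      calc y ^ ((1 : ℝ) / 3) ≤ y ^ (1 : ℝ) := Real.rpow_le_rpow_of_exponent_le hy1 (by norm_num)
        _ = y := Real.rpow_one y
    have hyp0 : 0 < y ^ ((1 : ℝ) / 3) := Real.rpow_pos_of_pos hy0 _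
    rw [one_mul]
    exact div_le_div₀ (by linarith) hz hyp0 hyp
  have hpp : (0 : ℝ) < Nat.primeCounting N := lt_of_lt_of_le (by positivity) hpi
  have h1 : 1 / y ≤ (S.card : ℝ) / Nat.primeCounting N := hratio.trans hd
  rw [le_div_iff₀ hpp] at h1
  have h2y : 2 * y ≤ t := by
    have h := Real.log_le_sub_one_of_pos (x := t / 2) (by positivity)
    rw [Real.log_div ht0.ne' (by norm_num)] at h
    linarith [Real.log_two_lt_d9]
  have hdens : N / t ^ 2 ≤ (S.card : ℝ) := by
    refine le_trans ?_ h1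
    calc (N : ℝ) / t ^ 2 = 1 / t * (N / t) := by field_simp
      _ ≤ 1 / (2 * y) * (N / t) := by gcongr
      _ = 1 / y * (N / (2 * t)) := by field_simp
      _ ≤ _ := by gcongr
  by_contra hcon
  refine hT₁ N hN1 S (fun x hx => ?_) ?_ hdens
  · have := Finset.mem_range.1 (Finset.mem_filter.1 hx).1
    omega
  · intro x hx z hz' w hw hxz
    by_contra hne
    apply hcon
    refine ⟨x, (Finset.mem_filter.1 hx).2, (w : ℤ) - x, ?_, ⟨w, (Finset.mem_filter.1 hw).2, by ring⟩,
      ⟨z, (Finset.mem_filter.1 hz').2, ?_⟩⟩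
    · intro h0
      omega
    · have : (x : ℤ) + z = w + w := by exact_mod_cast hxz
      linarith
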